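/- arXiv:2412.17663 — 9 statements merged into one kernel-verified Lean document; each statement's English description precedes it below -/
import Mathlib

section
/- Let W, X : ℕ×ℕ → ℝ be infinite matrices such that W is symmetric (W_{i,j} = W_{j,i}), X is tridiagonal (X_{i,j} = 0 whenever |i−j| > 1), and XᵀW = WX holds entrywise, i.e. for all m, n ∈ ℕ: X_{m-1,m} W_{m-1,n} + X_{m,m} W_{m,n} + X_{m+1,m} W_{m+1,n} = W_{m,n+1} X_{n+1,n} + W_{m,n} X_{n,n} + W_{m,n-1} X_{n-1,n} (terms with index −1 being zero). Fix n ≥ 1 and let A, B ∈ ℝ^{n×n} be the principal n×n sections of X and W respectively (entries with indices 0 ≤ i,j < n), let v ∈ ℝⁿ be given by v_i = W_{i,n} for 0 ≤ i < n, let e be the last standard basis vector of ℝⁿ, let G = ( e | −X_{n,n-1}·v ) ∈ ℝ^{n×2}, and let J = [[0,1],[−1,0]] ∈ ℝ^{2×2}. Then AᵀB − BA = G J Gᵀ. -/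
open Matrix

/-!
Every nonzero entry of one of the first `n` columns of a tridiagonal matrix lies in rows `0, …, n`.
Hence in `Xᵀ W = W Y` the entries with indices below `n` are sums over `k ≤ n`. The terms `k < n`
form the products of the `n × n` sections, and the terms `k = n` leave a difference of two outer
products in which row `n` of `X` and of `Y` enters only through its entry in column `n - 1`.
This difference has the form `G J Hᵀ`, where `G` is built from column `n` of `W` and `H` from row
`n`; if `X = Y` and `W` is symmetric, then `H = G`.
-/

/-- An infinite matrix is tridiagonal if its entries vanish off the main diagonal and the two
diagonals next to it. -/
def IsTridiagonal {R : Type*} [Zero R] (X : ℕ → ℕ → R) : Prop :=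
  ∀ i j : ℕ, (i + 1 < j ∨ j + 1 < i) → X i j = 0

theorem sum_range_eq_add_add_of_eq_zero {M : Type*} [AddCommMonoid M] {f : ℕ → M} {i n : ℕ}
    (hi : i < n) (hf : ∀ k, (k + 1 < i ∨ i + 1 < k) → f k = 0) :
    ∑ k ∈ Finset.range (n + 1), f k = (if i = 0 then 0 else f (i - 1)) + f i + f (i + 1) := by
  have hsupport : ∑ k ∈ Finset.Ico (i - 1) (i + 2), f k = ∑ k ∈ Finset.range (n + 1), f k := by
    refine Finset.sum_subset (fun k hk ↦ ?_) (fun k _ hk ↦ hf k ?_)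
    · rw [Finset.mem_Ico] at hk
      rw [Finset.mem_range]
      omega
    · rw [Finset.mem_Ico] at hk
      omega
  rw [← hsupport]
  cases i with
  | zero => simp [Finset.sum_range_succ]
  | succ i => simp [Finset.sum_Ico_succ_top]

theorem IsTridiagonal.apply_eq_ite {R : Type*} [Zero R] {X : ℕ → ℕ → R} (hX : IsTridiagonal X)
    {j n : ℕ} (hj : j < n) : X n j = if j = n - 1 then X n (n - 1) else 0 := by
  split_ifs with h
  · rw [h]
  · exact hX n j (Or.inr (by omega))

/-- The principal `n × n` section of an infinite matrix, with indices `0, …, n - 1`. -/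
def principalSection {R : Type*} (n : ℕ) (M : ℕ → ℕ → R) : Matrix (Fin n) (Fin n) R :=
  Matrix.of fun i j ↦ M i j

theorem transpose_principalSection_mul_sub_mul {R : Type*} [NonUnitalNonAssocRing R]
    {W X Y : ℕ → ℕ → R} {n : ℕ}
    (h : ∀ i j : Fin n, ∑ k ∈ Finset.range (n + 1), X k i * W k j =
      ∑ k ∈ Finset.range (n + 1), W i k * Y k j) :
    (principalSection n X)ᵀ * principalSection n W - principalSection n W * principalSection n Y =
      vecMulVec (fun i : Fin n ↦ W i n) (fun j : Fin n ↦ Y n j) -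
        vecMulVec (fun i : Fin n ↦ X n i) (fun j : Fin n ↦ W n j) := by
  ext i j
  have hij := h i j
  simp only [Finset.sum_range_succ, Finset.sum_range] at hij
  simpa only [Matrix.sub_apply, mul_apply, transpose_apply, principalSection, of_apply,
    vecMulVec_apply, sub_eq_sub_iff_add_eq_add, add_comm (W i n * Y n j)] using hij

theorem mul_skew_mul_transpose {R ι κ : Type*} [NonAssocRing R]
    (G : Matrix ι (Fin 2) R) (H : Matrix κ (Fin 2) R) :
    G * (!![0, 1; -1, 0] : Matrix (Fin 2) (Fin 2) R) * Hᵀ =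
      vecMulVec (G.col 0) (H.col 1) - vecMulVec (G.col 1) (H.col 0) := by
  ext i j
  simp [mul_apply, Fin.sum_univ_two, vecMulVec_apply, sub_eq_neg_add]

theorem finite_section_displacement_general {R : Type*} [Ring R] {W X Y : ℕ → ℕ → R}
    (hX : IsTridiagonal X) (hY : IsTridiagonal Y)
    (hWXY : ∀ m n : ℕ,
      (if m = 0 then 0 else X (m - 1) m * W (m - 1) n)
        + X m m * W m n + X (m + 1) m * W (m + 1) n
      = W m (n + 1) * Y (n + 1) n + W m n * Y n n
        + (if n = 0 then 0 else W m (n - 1) * Y (n - 1) n))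
    {n : ℕ} {e : Fin n → R} (he : ∀ i : Fin n, e i = if (i : ℕ) = n - 1 then 1 else 0)
    {G H : Matrix (Fin n) (Fin 2) R}
    (hG : ∀ i : Fin n, G i 0 = e i ∧ G i 1 = -(W i n * Y n (n - 1)))
    (hH : ∀ j : Fin n, H j 0 = e j ∧ H j 1 = -(X n (n - 1) * W n j)) :
    (principalSection n X)ᵀ * principalSection n W - principalSection n W * principalSection n Y =
      G * (!![0, 1; -1, 0] : Matrix (Fin 2) (Fin 2) R) * Hᵀ := by
  have h_truncated : ∀ i j : Fin n, ∑ k ∈ Finset.range (n + 1), X k i * W k j =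
      ∑ k ∈ Finset.range (n + 1), W i k * Y k j := fun i j ↦ by
    rw [sum_range_eq_add_add_of_eq_zero i.2 fun k hk ↦ by rw [hX k i hk, zero_mul],
      sum_range_eq_add_add_of_eq_zero j.2 fun k hk ↦ by rw [hY k j hk, mul_zero], hWXY]
    abel
  have hlast {Z : ℕ → ℕ → R} (hZ : IsTridiagonal Z) (i : Fin n) : Z n i = Z n (n - 1) * e i := by
    rw [hZ.apply_eq_ite i.2, he, mul_ite, mul_one, mul_zero]
  rw [transpose_principalSection_mul_sub_mul h_truncated, mul_skew_mul_transpose]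
  ext i j
  have hcomm : X n (n - 1) * e i = e i * X n (n - 1) := by simp [he]
  simp only [Matrix.sub_apply, vecMulVec_apply, col_apply, hG, hH, hlast hX i, hlast hY j, hcomm]
  noncomm_ring

/-- If `W` is symmetric, `X` is tridiagonal, and `Xᵀ W = W X`
entrywise, then the principal `n × n` sections `A` of `X` and `B` of `W`
satisfy the displacement equation `Aᵀ B - B A = G J Gᵀ` with generators
`G = (e | -X_{n,n-1} v)`, where `v_i = W_{i,n}`, `e` is the last standard
basis vector, and `J = [[0,1],[-1,0]]`. -/
theorem finite_section_displacement
    (W X : ℕ → ℕ → ℝ)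
    (hsymm : ∀ i j : ℕ, W i j = W j i)
    (htri : ∀ i j : ℕ, (i + 1 < j ∨ j + 1 < i) → X i j = 0)
    (hdisp : ∀ m n : ℕ,
      (if m = 0 then 0 else X (m - 1) m * W (m - 1) n)
        + X m m * W m n + X (m + 1) m * W (m + 1) n
      = W m (n + 1) * X (n + 1) n + W m n * X n n
        + (if n = 0 then 0 else W m (n - 1) * X (n - 1) n))
    (n : ℕ) (hn : 1 ≤ n)
    (A B : Matrix (Fin n) (Fin n) ℝ)
    (hA : ∀ i j : Fin n, A i j = X i j)
    (hB : ∀ i j : Fin n, B i j = W i j)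
    (v : Fin n → ℝ) (hv : ∀ i : Fin n, v i = W i n)
    (e : Fin n → ℝ) (he : ∀ i : Fin n, e i = if (i : ℕ) = n - 1 then 1 else 0)
    (G : Matrix (Fin n) (Fin 2) ℝ)
    (hG : ∀ i : Fin n, G i 0 = e i ∧ G i 1 = -X n (n - 1) * v i)
    (J : Matrix (Fin 2) (Fin 2) ℝ) (hJ : J = !![0, 1; -1, 0]) :
    Aᵀ * B - B * A = G * J * Gᵀ := by
  obtain rfl : A = principalSection n X := Matrix.ext hA
  obtain rfl : B = principalSection n W := Matrix.ext hB
  rw [hJ]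
  exact finite_section_displacement_general htri htri hdisp he
    (fun i ↦ ⟨(hG i).1, by rw [(hG i).2, hv, neg_mul, mul_comm]⟩)
    (fun j ↦ ⟨(hG j).1, by rw [(hG j).2, hv, neg_mul, hsymm]⟩)
end

section
/- Let W, X : ℕ×ℕ → ℝ be infinite matrices such that W is symmetric, X is tridiagonal (X_{i,j} = 0 whenever |i−j| > 1), and XᵀW = WX holds entrywise (terms with index −1 being zero). Fix n ≥ 2 and let A, B ∈ ℝ^{n×n} be the principal n×n sections of X and W, let e be the last standard basis vector of ℝⁿ, and let u ∈ ℝⁿ be given by u_i = W_{i,n-2} X_{n-2,n-1} + W_{i,n-1} X_{n-1,n-1} − Σ_{k=0}^{n-1} X_{k,i} W_{k,n-1} for 0 ≤ i < n. Let G = ( e | u ) ∈ ℝ^{n×2} and J = [[0,1],[−1,0]]. Then AᵀB − BA = G J Gᵀ. -/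
open Matrix

/-!
A column of a tridiagonal matrix other than the last one is not cut off by the section, so away from
the last row and column `Aᵀ B` and `B A` have the entries of `Xᵀ W` and `W X`, and therefore agree.
Since `B` is symmetric, `Aᵀ B - B A = S - Sᵀ` with `S = Aᵀ B` is alternating; being supported in its
last row and column, it equals `e uᵀ - u eᵀ` with `u` the last column of `B A - Aᵀ B`.
-/

lemma sum_fin_succ_of_eq_zero {M : Type*} [AddCommMonoid M] (f : ℕ → M) (i : ℕ)
    (hf : ∀ k, k + 1 < i → f k = 0) :
    ∑ k : Fin (i + 1), f k = (if i = 0 then 0 else f (i - 1)) + f i := by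
  rw [Fin.sum_univ_castSucc]
  cases i with
  | zero => simp
  | succ i =>
    rw [Fin.sum_univ_castSucc, Finset.sum_eq_zero fun k _ => hf _ (by simp)]
    simp

lemma sum_fin_of_band {M : Type*} [AddCommMonoid M] (f : ℕ → M) {i n : ℕ} (hi : i + 1 < n)
    (hf : ∀ k < n, k + 1 < i ∨ i + 1 < k → f k = 0) :
    ∑ k : Fin n, f k = (if i = 0 then 0 else f (i - 1)) + f i + f (i + 1) := by
  obtain ⟨d, rfl⟩ := Nat.exists_eq_add_of_le (show i + 1 + 1 ≤ n from hi)
  rw [Fin.sum_univ_add, Finset.sum_eq_zero (s := Finset.univ (α := Fin d)), add_zero,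
    Fin.sum_univ_castSucc]
  · congr 1
    exact sum_fin_succ_of_eq_zero f i fun k hk => hf k (by lia) (Or.inl hk)
  · intro k _
    exact hf _ (Fin.is_lt _) (Or.inr (by simp only [Fin.val_natAdd]; lia))

/-- The principal `n × n` section of an infinite matrix; the displacement equation is about the
sections of `X` and `W`. An infinite matrix is a plain function of two indices, since no product of
two of them is taken. -/
def finiteSection {R : Type*} (n : ℕ) (M : ℕ → ℕ → R) : Matrix (Fin n) (Fin n) R :=
  Matrix.of fun i j => M i j

section Tridiagonal

variable {R : Type*} [NonUnitalNonAssocSemiring R] {n : ℕ} {X : ℕ → ℕ → R}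
  (htri : ∀ i j : Fin n, (i : ℕ) + 1 < j ∨ (j : ℕ) + 1 < i → X i j = 0)
include htri

lemma transpose_finiteSection_mul_apply_of_lt (W : ℕ → ℕ → R) {i : Fin n} (hi : (i : ℕ) + 1 < n)
    (j : Fin n) :
    ((finiteSection n X)ᵀ * finiteSection n W) i j =
      (if (i : ℕ) = 0 then 0 else X (i - 1) i * W (i - 1) j)
        + X i i * W i j + X (i + 1) i * W (i + 1) j :=
  sum_fin_of_band (fun k => X k i * W k j) hi fun k hk hki => by
    rw [htri ⟨k, hk⟩ i hki, zero_mul]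

lemma finiteSection_mul_apply_of_lt (W : ℕ → ℕ → R) (i : Fin n) {j : Fin n} (hj : (j : ℕ) + 1 < n) :
    (finiteSection n W * finiteSection n X) i j =
      W i (j + 1) * X (j + 1) j + W i j * X j j
        + (if (j : ℕ) = 0 then 0 else W i (j - 1) * X (j - 1) j) :=
  (sum_fin_of_band (fun k => W i k * X k j) hj fun k hk hkj => by
    rw [htri ⟨k, hk⟩ j hkj, mul_zero]).trans (by abel)

end Tridiagonal

lemma finiteSection_mul_apply_last {R : Type*} [NonUnitalNonAssocSemiring R] {m : ℕ}
    (W X : ℕ → ℕ → R) (hX : ∀ k < m, X k (m + 1) = 0) (i : Fin (m + 2)) :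
    (finiteSection (m + 2) W * finiteSection (m + 2) X) i (Fin.last (m + 1)) =
      W i m * X m (m + 1) + W i (m + 1) * X (m + 1) (m + 1) :=
  sum_fin_succ_of_eq_zero (fun k => W i k * X k (m + 1)) (m + 1) fun k hk => by
    rw [hX k (by lia), mul_zero]

lemma sub_transpose_eq_vecMulVec_single_sub {ι R : Type*} [DecidableEq ι] [NonAssocRing R]
    (S : Matrix ι ι R) (p : ι) (hS : ∀ i j, i ≠ p → j ≠ p → S i j = S j i) :
    S - Sᵀ = vecMulVec (Pi.single p 1) ((Sᵀ - S).col p)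
      - vecMulVec ((Sᵀ - S).col p) (Pi.single p 1) := by
  ext i j
  by_cases hi : i = p <;> by_cases hj : j = p <;> simp_all [vecMulVec_apply]

lemma transpose_mul_sub_mul_eq_vecMulVec_single_sub {ι R : Type*} [Fintype ι] [DecidableEq ι]
    [CommRing R] {A B : Matrix ι ι R} (hB : B.IsSymm) (p : ι)
    (hAB : ∀ i j, i ≠ p → j ≠ p → (Aᵀ * B) i j = (B * A) i j) :
    Aᵀ * B - B * A = vecMulVec (Pi.single p 1) ((B * A - Aᵀ * B).col p)
      - vecMulVec ((B * A - Aᵀ * B).col p) (Pi.single p 1) := by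
  have hBA : B * A = (Aᵀ * B)ᵀ := by rw [transpose_mul, transpose_transpose, hB.eq]
  rw [hBA] at hAB ⊢
  exact sub_transpose_eq_vecMulVec_single_sub _ p hAB

lemma mul_symplectic_mul_transpose {ι R : Type*} [NonAssocRing R] (G : Matrix ι (Fin 2) R) :
    G * (!![0, 1; -1, 0] : Matrix (Fin 2) (Fin 2) R) * Gᵀ =
      vecMulVec (G.col 0) (G.col 1) - vecMulVec (G.col 1) (G.col 0) := by
  ext i j
  simp [mul_apply, vecMulVec_apply, Fin.sum_univ_two, sub_eq_neg_add]

theorem finite_section_displacement_practical_generators_general {R : Type*} [CommRing R]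
    (W X : ℕ → ℕ → R) {n : ℕ} (hn : 2 ≤ n)
    (hsymm : ∀ i j : Fin n, W i j = W j i)
    (htri : ∀ i j : Fin n, (i : ℕ) + 1 < j ∨ (j : ℕ) + 1 < i → X i j = 0)
    (hdisp : ∀ i j : ℕ, i + 1 < n → j + 1 < n →
      (if i = 0 then 0 else X (i - 1) i * W (i - 1) j)
        + X i i * W i j + X (i + 1) i * W (i + 1) j
      = W i (j + 1) * X (j + 1) j + W i j * X j j
        + (if j = 0 then 0 else W i (j - 1) * X (j - 1) j))
    (G : Matrix (Fin n) (Fin 2) R)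
    (hG : ∀ i : Fin n, G i 0 = (if (i : ℕ) = n - 1 then 1 else 0) ∧
      G i 1 = W i (n - 2) * X (n - 2) (n - 1) + W i (n - 1) * X (n - 1) (n - 1)
        - ∑ k : Fin n, X k i * W k (n - 1)) :
    (finiteSection n X)ᵀ * finiteSection n W - finiteSection n W * finiteSection n X =
      G * (!![0, 1; -1, 0] : Matrix (Fin 2) (Fin 2) R) * Gᵀ := by
  obtain ⟨m, rfl⟩ := Nat.exists_eq_add_of_le' hn
  have hW : (finiteSection (m + 2) W).IsSymm := Matrix.ext fun i j => hsymm j i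
  have he : G.col 0 = Pi.single (Fin.last (m + 1)) 1 := by
    ext i
    simp [(hG i).1, Pi.single_apply, Fin.ext_iff]
  have hu : G.col 1 = (finiteSection (m + 2) W * finiteSection (m + 2) X
      - (finiteSection (m + 2) X)ᵀ * finiteSection (m + 2) W).col (Fin.last (m + 1)) := by
    ext i
    have hX : ∀ k < m, X k (m + 1) = 0 := fun k hk =>
      htri ⟨k, by lia⟩ (Fin.last (m + 1)) (Or.inl (by simpa using hk))
    rw [col_apply, (hG i).2, col_apply, Matrix.sub_apply, finiteSection_mul_apply_last W X hX i]
    rfl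
  rw [mul_symplectic_mul_transpose, he, hu]
  refine transpose_mul_sub_mul_eq_vecMulVec_single_sub hW _ fun i j hi hj => ?_
  have hi_lt : (i : ℕ) + 1 < m + 2 := Nat.succ_lt_succ (Fin.val_lt_last hi)
  have hj_lt : (j : ℕ) + 1 < m + 2 := Nat.succ_lt_succ (Fin.val_lt_last hj)
  rw [transpose_finiteSection_mul_apply_of_lt htri W hi_lt,
    finiteSection_mul_apply_of_lt htri W i hj_lt, hdisp i j hi_lt hj_lt]

/-- Alternative (practical) form of the generators: if `W` is
symmetric, `X` tridiagonal, and `Xᵀ W = W X` entrywise, then with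
`u_i = W_{i,n-2} X_{n-2,n-1} + W_{i,n-1} X_{n-1,n-1} - ∑_{k<n} X_{k,i} W_{k,n-1}`,
the principal sections satisfy `Aᵀ B - B A = G J Gᵀ` for `G = (e | u)`. -/
theorem finite_section_displacement_practical_generators
    (W X : ℕ → ℕ → ℝ)
    (hsymm : ∀ i j : ℕ, W i j = W j i)
    (htri : ∀ i j : ℕ, (i + 1 < j ∨ j + 1 < i) → X i j = 0)
    (hdisp : ∀ m n : ℕ,
      (if m = 0 then 0 else X (m - 1) m * W (m - 1) n)
        + X m m * W m n + X (m + 1) m * W (m + 1) n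
      = W m (n + 1) * X (n + 1) n + W m n * X n n
        + (if n = 0 then 0 else W m (n - 1) * X (n - 1) n))
    (n : ℕ) (hn : 2 ≤ n)
    (A B : Matrix (Fin n) (Fin n) ℝ)
    (hA : ∀ i j : Fin n, A i j = X i j)
    (hB : ∀ i j : Fin n, B i j = W i j)
    (e : Fin n → ℝ) (he : ∀ i : Fin n, e i = if (i : ℕ) = n - 1 then 1 else 0)
    (u : Fin n → ℝ)
    (hu : ∀ i : Fin n, u i
      = W i (n - 2) * X (n - 2) (n - 1) + W i (n - 1) * X (n - 1) (n - 1)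
        - ∑ k : Fin n, X (k : ℕ) (i : ℕ) * W (k : ℕ) (n - 1))
    (G : Matrix (Fin n) (Fin 2) ℝ)
    (hG : ∀ i : Fin n, G i 0 = e i ∧ G i 1 = u i)
    (J : Matrix (Fin 2) (Fin 2) ℝ) (hJ : J = !![0, 1; -1, 0]) :
    Aᵀ * B - B * A = G * J * Gᵀ := by
  obtain ⟨rfl, rfl⟩ : A = finiteSection n X ∧ B = finiteSection n W := ⟨ext hA, ext hB⟩
  exact hJ ▸ finite_section_displacement_practical_generators_general W X hn (fun _ _ => hsymm _ _)
    (fun _ _ => htri _ _) (fun _ _ _ _ => hdisp _ _) G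
    fun i => ⟨(hG i).1.trans (he i), (hG i).2.trans (hu i)⟩
end

section
/- Let n ≥ 2 and let W₁ ∈ ℝ^{n×n} be symmetric and positive definite, partitioned as W₁ = [[d₁, l₁ᵀ],[l₁, Ŵ₁]] with d₁ ∈ ℝ, l₁ ∈ ℝ^{n-1}, Ŵ₁ ∈ ℝ^{(n-1)×(n-1)}. Let X₁ ∈ ℝ^{n×n} have the form X₁ = [[α, β e₁ᵀ],[γ e₁, X̂₁]] + e₁ r₁ᵀ, where α, β, γ ∈ ℝ, X̂₁ ∈ ℝ^{(n-1)×(n-1)} is tridiagonal, e₁ denotes the first standard basis vector (of the appropriate size), and r₁ ∈ ℝⁿ. Suppose G₁ ∈ ℝ^{n×2} and J ∈ ℝ^{2×2} satisfy the displacement equation X₁ᵀW₁ − W₁X₁ = G₁ J G₁ᵀ. Write G₁ with first row g₁ ∈ ℝ^{1×2} and remaining rows Ĝ₁ ∈ ℝ^{(n-1)×2}. Define the Schur complement W₂ = Ŵ₁ − (1/d₁) l₁ l₁ᵀ, and set X₂ = X̂₁ − (γ/d₁) e₁ l₁ᵀ and G₂ = Ĝ₁ − (1/d₁) l₁ g₁.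 Then X₂ᵀW₂ − W₂X₂ = G₂ J G₂ᵀ. -/
open Matrix

/-!
Eliminating the leading block of `W = [[A, B], [C, D]]` with multipliers `V = C A⁻¹` and
`U = A⁻¹ B`, encoded by `V A = C` and `A U = B`, means multiplying by `L = [-V, 1]` on the left and
by `R = [-U; 1]` on the right: `L W = [0, S]` and `W R = [0; S]`, where `S = D - V B` is the Schur
complement. Hence `L (Y W - W X) R = (L Y) [0; S] - [0, S] (X R)` sees only the trailing columns of
`L Y` and the trailing rows of `X R`, so the displacement equation `Y W - W X = P J Q` descends
to `S`. The Cholesky step is the case `Y = Xᵀ`, `U = Vᵀ`, `Q = Pᵀ` with a scalar pivot `A`.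
-/

section BlockElimination

variable {R m₁ m₂ n₁ n₂ p q : Type*} [Ring R]

section Rows

variable [Fintype m₁] [Fintype m₂]

/-- The block row `[-V, 1]`: multiplying by it on the left subtracts `V` times the leading rows
from the trailing rows and discards the leading rows. -/
def rowElim [DecidableEq m₂] (V : Matrix m₂ m₁ R) : Matrix m₂ (m₁ ⊕ m₂) R :=
  fromCols (-V) 1

theorem rowElim_mul [DecidableEq m₂] (V : Matrix m₂ m₁ R) (M : Matrix (m₁ ⊕ m₂) p R) :
    rowElim V * M = M.toRows₂ - V * M.toRows₁ := by
  rw [rowElim, ← fromRows_toRows M, fromCols_mul_fromRows]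
  simp [neg_add_eq_sub]

theorem rowElim_mul_fromBlocks [DecidableEq m₂] {V : Matrix m₂ m₁ R} {A : Matrix m₁ n₁ R}
    {C : Matrix m₂ n₁ R} (hV : V * A = C) (B : Matrix m₁ n₂ R) (D : Matrix m₂ n₂ R) :
    rowElim V * fromBlocks A B C D = fromCols 0 (D - V * B) := by
  rw [rowElim, fromCols_mul_fromBlocks]
  simp [hV, neg_add_eq_sub]

theorem mul_fromRows_zero (M : Matrix p (m₁ ⊕ m₂) R) (S : Matrix m₂ q R) :
    M * fromRows (0 : Matrix m₁ q R) S = M.toCols₂ * S := by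
  rw [← fromCols_toCols M, fromCols_mul_fromRows]
  simp

end Rows

section Columns

variable [Fintype n₁] [Fintype n₂]

/-- The block column `[-U; 1]`: multiplying by it on the right subtracts the leading columns
times `U` from the trailing columns and discards the leading columns. -/
def colElim [DecidableEq n₂] (U : Matrix n₁ n₂ R) : Matrix (n₁ ⊕ n₂) n₂ R :=
  fromRows (-U) 1

theorem mul_colElim [DecidableEq n₂] (M : Matrix p (n₁ ⊕ n₂) R) (U : Matrix n₁ n₂ R) :
    M * colElim U = M.toCols₂ - M.toCols₁ * U := by
  rw [colElim, ← fromCols_toCols M, fromCols_mul_fromRows]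
  simp [neg_add_eq_sub]

theorem fromBlocks_mul_colElim [DecidableEq n₂] {A : Matrix m₁ n₁ R} {U : Matrix n₁ n₂ R}
    {B : Matrix m₁ n₂ R} (hU : A * U = B) (C : Matrix m₂ n₁ R) (D : Matrix m₂ n₂ R) :
    fromBlocks A B C D * colElim U = fromRows 0 (D - C * U) := by
  rw [colElim, fromBlocks_mul_fromRows]
  simp [hU, neg_add_eq_sub]

theorem fromCols_zero_mul (S : Matrix p n₂ R) (M : Matrix (n₁ ⊕ n₂) q R) :
    fromCols (0 : Matrix p n₁ R) S * M = S * M.toRows₂ := by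
  rw [← fromRows_toRows M, fromCols_mul_fromRows]
  simp

end Columns

theorem displacement_schur_complement_of_mul_eq
    [Fintype m₁] [Fintype m₂] [Fintype n₁] [Fintype n₂] [Fintype p] [Fintype q]
    {A : Matrix m₁ n₁ R} {B : Matrix m₁ n₂ R} {C : Matrix m₂ n₁ R} {D : Matrix m₂ n₂ R}
    {Y : Matrix (m₁ ⊕ m₂) (m₁ ⊕ m₂) R} {X : Matrix (n₁ ⊕ n₂) (n₁ ⊕ n₂) R}
    {P : Matrix (m₁ ⊕ m₂) p R} {J : Matrix p q R} {Q : Matrix q (n₁ ⊕ n₂) R}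
    {V : Matrix m₂ m₁ R} {U : Matrix n₁ n₂ R} (hV : V * A = C) (hU : A * U = B)
    (hdisp : Y * fromBlocks A B C D - fromBlocks A B C D * X = P * J * Q) :
    (Y.toBlocks₂₂ - V * Y.toBlocks₁₂) * (D - V * B)
        - (D - V * B) * (X.toBlocks₂₂ - X.toBlocks₂₁ * U)
      = (P.toRows₂ - V * P.toRows₁) * J * (Q.toCols₂ - Q.toCols₁ * U) := by
  classical
  set W := fromBlocks A B C D
  have hLW : rowElim V * W = fromCols 0 (D - V * B) := rowElim_mul_fromBlocks hV B D
  have hWR : W * colElim U = fromRows 0 (D - V * B) := by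
    rw [fromBlocks_mul_colElim hU, ← hV, ← hU, Matrix.mul_assoc]
  have hLY : (rowElim V * Y).toCols₂ = Y.toBlocks₂₂ - V * Y.toBlocks₁₂ := by
    rw [rowElim_mul]; rfl
  have hXR : (X * colElim U).toRows₂ = X.toBlocks₂₂ - X.toBlocks₂₁ * U := by
    rw [mul_colElim]; rfl
  calc
    _ = rowElim V * Y * (W * colElim U) - rowElim V * W * (X * colElim U) := by
      rw [hWR, hLW, mul_fromRows_zero, fromCols_zero_mul, hLY, hXR]
    _ = rowElim V * (Y * W - W * X) * colElim U := by
      simp only [Matrix.mul_sub, Matrix.sub_mul, Matrix.mul_assoc]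
    _ = rowElim V * P * J * (Q * colElim U) := by
      simp only [hdisp, Matrix.mul_assoc]
    _ = _ := by rw [rowElim_mul, mul_colElim]

end BlockElimination

theorem displacement_schur_complement_step_general {K n p : Type*} [Field K]
    [Fintype n] [Fintype p] {W X : Matrix (Fin 1 ⊕ n) (Fin 1 ⊕ n) K}
    {d : K} (hd : d ≠ 0) {l : n → K} {D : Matrix n n K}
    (hW : W = fromBlocks (of fun _ _ => d) (replicateRow (Fin 1) l) (replicateCol (Fin 1) l) D)
    {G : Matrix (Fin 1 ⊕ n) p K} {J : Matrix p p K} (hdisp : Xᵀ * W - W * X = G * J * Gᵀ)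
    {W₂ X₂ : Matrix n n K} {G₂ : Matrix n p K} (hW₂ : W₂ = D - (1 / d) • vecMulVec l l)
    (hX₂ : X₂ = X.toBlocks₂₂ - (1 / d) • vecMulVec (X.toBlocks₂₁.col 0) l)
    (hG₂ : G₂ = G.toRows₂ - (1 / d) • vecMulVec l (G.toRows₁.row 0)) :
    X₂ᵀ * W₂ - W₂ * X₂ = G₂ * J * G₂ᵀ := by
  subst hW
  let V : Matrix n (Fin 1) K := (1 / d) • replicateCol (Fin 1) l
  let A : Matrix (Fin 1) (Fin 1) K := of fun _ _ => d
  have hV : V * A = replicateCol (Fin 1) l := by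
    ext; simp [A, V, mul_apply, mul_right_comm, hd]
  have hVt : A * Vᵀ = replicateRow (Fin 1) l := by
    ext; simp [A, V, mul_apply, hd]
  have hW₂V : W₂ = D - V * replicateRow (Fin 1) l := by
    ext; simp [hW₂, V, mul_apply, vecMulVec_apply]
  have hX₂V : X₂ = X.toBlocks₂₂ - X.toBlocks₂₁ * Vᵀ := by
    ext; simp [hX₂, V, mul_apply, vecMulVec_apply]
  have hG₂V : G₂ = G.toRows₂ - V * G.toRows₁ := by
    ext; simp [hG₂, V, mul_apply, vecMulVec_apply]
  have hX₂T : X₂ᵀ = Xᵀ.toBlocks₂₂ - V * Xᵀ.toBlocks₁₂ := by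
    rw [hX₂V, transpose_sub, transpose_mul, transpose_transpose]; rfl
  have hG₂T : G₂ᵀ = Gᵀ.toCols₂ - Gᵀ.toCols₁ * Vᵀ := by
    rw [hG₂V, transpose_sub, transpose_mul]; rfl
  rw [hX₂T, hG₂T, hX₂V, hW₂V, hG₂V]
  exact displacement_schur_complement_of_mul_eq hV hVt hdisp

/-- One step of Cholesky factorization preserves the displacement
structure: if `X₁ᵀ W₁ - W₁ X₁ = G₁ J G₁ᵀ` with `W₁` symmetric positive definite
and `X₁` tridiagonal-plus-first-row, then the Schur complement
`W₂ = Ŵ₁ - l₁l₁ᵀ/d₁` satisfies `X₂ᵀ W₂ - W₂ X₂ = G₂ J G₂ᵀ` with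
`X₂ = X̂₁ - (γ/d₁) e₁ l₁ᵀ` and `G₂ = Ĝ₁ - l₁ g₁ / d₁`.
Here the size is `n = k + 2 ≥ 2`, indexed by `Fin 1 ⊕ Fin (k+1)`. -/
theorem displacement_schur_complement_step
    (k : ℕ)
    (W₁ X₁ : Matrix (Fin 1 ⊕ Fin (k + 1)) (Fin 1 ⊕ Fin (k + 1)) ℝ)
    (hWpd : W₁.PosDef)
    (d₁ : ℝ) (l₁ : Fin (k + 1) → ℝ) (What : Matrix (Fin (k + 1)) (Fin (k + 1)) ℝ)
    (hW : W₁ = Matrix.fromBlocks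
      (Matrix.of fun _ _ => d₁)
      (Matrix.of fun _ j => l₁ j)
      (Matrix.of fun i _ => l₁ i) What)
    (α β γ : ℝ) (Xhat : Matrix (Fin (k + 1)) (Fin (k + 1)) ℝ)
    (r₁ : Fin 1 ⊕ Fin (k + 1) → ℝ)
    (htri : ∀ i j : Fin (k + 1), ((i : ℕ) + 1 < j ∨ (j : ℕ) + 1 < i) → Xhat i j = 0)
    (hX : X₁ = Matrix.fromBlocks
      (Matrix.of fun _ _ => α)
      (Matrix.of fun _ j => if j = 0 then β else 0)
      (Matrix.of fun i _ => if i = 0 then γ else 0) Xhat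
      + Matrix.vecMulVec (Pi.single (Sum.inl 0) 1) r₁)
    (G₁ : Matrix (Fin 1 ⊕ Fin (k + 1)) (Fin 2) ℝ) (J : Matrix (Fin 2) (Fin 2) ℝ)
    (hdisp : X₁ᵀ * W₁ - W₁ * X₁ = G₁ * J * G₁ᵀ)
    (g₁ : Fin 2 → ℝ) (hg₁ : ∀ j, g₁ j = G₁ (Sum.inl 0) j)
    (Ghat : Matrix (Fin (k + 1)) (Fin 2) ℝ)
    (hGhat : ∀ i j, Ghat i j = G₁ (Sum.inr i) j)
    (W₂ X₂ : Matrix (Fin (k + 1)) (Fin (k + 1)) ℝ)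
    (hW₂ : W₂ = What - (1 / d₁) • Matrix.vecMulVec l₁ l₁)
    (hX₂ : X₂ = Xhat - (γ / d₁) • Matrix.vecMulVec (Pi.single 0 1) l₁)
    (G₂ : Matrix (Fin (k + 1)) (Fin 2) ℝ)
    (hG₂ : ∀ i j, G₂ i j = Ghat i j - (1 / d₁) * l₁ i * g₁ j) :
    X₂ᵀ * W₂ - W₂ * X₂ = G₂ * J * G₂ᵀ := by
  have hd : d₁ ≠ 0 := by simpa [hW] using (hWpd.diag_pos (i := Sum.inl 0)).ne'
  have hX₂₂ : X₁.toBlocks₂₂ = Xhat := by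
    ext; simp [hX, toBlocks₂₂, vecMulVec_apply]
  have hX₂₁ : X₁.toBlocks₂₁.col 0 = γ • Pi.single 0 1 := by
    ext; simp [hX, toBlocks₂₁, vecMulVec_apply, Pi.single_apply]
  exact displacement_schur_complement_step_general hd hW hdisp hW₂
    (by rw [hX₂, hX₂₂, hX₂₁, smul_vecMulVec, smul_smul, one_div_mul_eq_div])
    (by ext; simp [hG₂, hGhat, hg₁, vecMulVec_apply, mul_assoc])
end

section
/- Let T_n denote the Chebyshev polynomial of the first kind. Then ∫_{−1}^{1} T_n(x) · log(2/(1−x)) · (1−x²)^{−1/2} dx equals 2π·log 2 when n = 0, and equals π/n when n ≥ 1. -/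
open Polynomial MeasureTheory Real

/-!
Under `x = cos θ` the weight becomes `log (2 / (1 - cos θ)) = -2 log (sin (θ / 2))`, so the moments
are `-2 ∫₀^π cos (n θ) log (sin (θ / 2)) dθ`, which for `n = 0` is Euler's log-sine integral.
For `n ≥ 1`, integrating by parts replaces the logarithm by `sin (n θ) cot (θ / 2)`, and this is no
longer singular: it equals `(1 + x) Uₙ₋₁(x)`, which differs from `1 + x` by a sum of Chebyshev
polynomials `Tₖ` with `k ≥ 1`. These are orthogonal to constants, so the integral of
`(1 + x) Uₙ₋₁(x)` against `(1 - x²)^(-1/2)` does not depend on `n`.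
-/

section

open Polynomial.Chebyshev

theorem one_add_X_mul_U_add_one (R : Type*) [CommRing R] (n : ℤ) :
    (1 + X) * U R (n + 1) = (1 + X) * U R n + T R (n + 1) + T R (n + 2) := by
  linear_combination U_eq_X_mul_U_add_T R n - T_eq_X_mul_U_sub_U R n

theorem integral_eval_one_add_X_mul_U_measureT (n : ℕ) :
    ∫ x, ((1 + X) * U ℝ n).eval x ∂measureT = π := by
  have integral_eval_add (p q : ℝ[X]) : ∫ x, (p + q).eval x ∂measureT =
      (∫ x, p.eval x ∂measureT) + ∫ x, q.eval x ∂measureT := by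
    simp_rw [eval_add]
    exact integral_add (integrable_measureT p.continuousOn) (integrable_measureT q.continuousOn)
  induction n with
  | zero =>
    have h : (1 + X) * U ℝ (0 : ℕ) = T ℝ 0 + T ℝ 1 := by simp
    rw [h, integral_eval_add, integral_eval_T_real_measureT_zero,
      integral_eval_T_real_measureT_of_ne_zero one_ne_zero, add_zero]
  | succ n ih =>
    rw [Nat.cast_succ, one_add_X_mul_U_add_one, integral_eval_add, integral_eval_add, ih,
      integral_eval_T_real_measureT_of_ne_zero (by lia),
      integral_eval_T_real_measureT_of_ne_zero (by lia), add_zero, add_zero]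

theorem sin_add_one_mul_eq_eval_U_mul (n : ℤ) (θ : ℝ) :
    sin ((n + 1) * θ) = 2 * (U ℝ n).eval (cos θ) * cos (θ / 2) * sin (θ / 2) := by
  have sin_double : sin θ = 2 * sin (θ / 2) * cos (θ / 2) := by
    rw [← sin_two_mul, mul_div_cancel₀ θ two_ne_zero]
  rw [← U_real_cos, sin_double]
  ring

theorem sin_add_one_mul_mul_cot_half (n : ℤ) {θ : ℝ} (hθ : sin (θ / 2) ≠ 0) :
    sin ((n + 1) * θ) * cot (θ / 2) = ((1 + X) * U ℝ n).eval (cos θ) := by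
  have cos_double : 1 + cos θ = 2 * cos (θ / 2) ^ 2 := by
    rw [cos_sq, mul_div_cancel₀ θ two_ne_zero]
    ring
  rw [sin_add_one_mul_eq_eval_U_mul, cot_eq_cos_div_sin, eval_mul, eval_add, eval_one, eval_X,
    cos_double]
  field

theorem continuous_sin_add_one_mul_mul_log_sin_half (n : ℤ) :
    Continuous fun θ : ℝ ↦ sin ((n + 1) * θ) * log (sin (θ / 2)) := by
  have cancel_singularity (θ : ℝ) : sin ((n + 1) * θ) * log (sin (θ / 2)) =
      2 * (U ℝ n).eval (cos θ) * cos (θ / 2) * (sin (θ / 2) * log (sin (θ / 2))) := by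
    rw [sin_add_one_mul_eq_eval_U_mul, mul_assoc]
  have continuous_factor :
      Continuous fun θ : ℝ ↦ 2 * (U ℝ n).eval (cos θ) * cos (θ / 2) := by fun_prop
  simp_rw [cancel_singularity]
  exact continuous_factor.mul (continuous_mul_log.comp (by fun_prop))

theorem hasDerivAt_log_sin_half {θ : ℝ} (hθ : sin (θ / 2) ≠ 0) :
    HasDerivAt (fun θ ↦ log (sin (θ / 2))) (cot (θ / 2) / 2) θ := by
  refine (((hasDerivAt_id' θ).div_const 2).sin.log hθ).congr_deriv ?_
  rw [cot_eq_cos_div_sin]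
  ring

theorem hasDerivAt_sin_add_one_mul_mul_log_sin_half (n : ℤ) {θ : ℝ} (hθ : sin (θ / 2) ≠ 0) :
    HasDerivAt (fun θ ↦ sin ((n + 1) * θ) * log (sin (θ / 2)))
      ((n + 1) * (cos ((n + 1) * θ) * log (sin (θ / 2))) +
        ((1 + X) * U ℝ n).eval (cos θ) / 2) θ := by
  refine (((hasDerivAt_id' θ).const_mul (n + 1 : ℝ)).sin.mul
    (hasDerivAt_log_sin_half hθ)).congr_deriv ?_
  linear_combination sin_add_one_mul_mul_cot_half n hθ / 2

theorem intervalIntegrable_log_sin_half (a b : ℝ) :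
    IntervalIntegrable (fun θ ↦ log (sin (θ / 2))) volume a b := by
  have h : IntervalIntegrable (log ∘ sin) volume (a / 2) (b / 2) := intervalIntegrable_log_sin
  simpa [div_eq_mul_inv] using h.comp_mul_right (c := 2⁻¹)

theorem integral_log_sin_half_zero_pi : ∫ θ in 0..π, log (sin (θ / 2)) = -π * log 2 := by
  rw [intervalIntegral.integral_comp_div (fun t ↦ log (sin t)) two_ne_zero, zero_div,
    integral_log_sin_zero_pi_div_two, smul_eq_mul]
  ring

theorem add_one_mul_integral_cos_add_one_mul_mul_log_sin_half (n : ℤ) :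
    (n + 1) * ∫ θ in 0..π, cos ((n + 1) * θ) * log (sin (θ / 2)) =
      -(∫ x, ((1 + X) * U ℝ n).eval x ∂measureT) / 2 := by
  have integrable_cos_mul_log : IntervalIntegrable
      (fun θ ↦ (n + 1) * (cos ((n + 1) * θ) * log (sin (θ / 2)))) volume 0 π :=
    ((intervalIntegrable_log_sin_half 0 π).continuousOn_mul (by fun_prop)).const_mul _
  have integrable_eval :
      IntervalIntegrable (fun θ ↦ ((1 + X) * U ℝ n).eval (cos θ) / 2) volume 0 π :=
    Continuous.intervalIntegrable (by fun_prop) _ _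
  have by_parts := intervalIntegral.integral_eq_sub_of_hasDerivAt_of_le pi_nonneg
    (continuous_sin_add_one_mul_mul_log_sin_half n).continuousOn
    (fun θ hθ ↦ hasDerivAt_sin_add_one_mul_mul_log_sin_half n
      (sin_pos_of_pos_of_lt_pi (by linarith [hθ.1]) (by linarith [hθ.1, hθ.2])).ne')
    (integrable_cos_mul_log.add integrable_eval)
  rw [intervalIntegral.integral_add integrable_cos_mul_log integrable_eval,
    intervalIntegral.integral_const_mul, intervalIntegral.integral_div, sin_pi_div_two, log_one,
    mul_zero, mul_zero, sin_zero, zero_mul, sub_zero] at by_parts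
  rw [integral_measureT_eq_integral_cos]
  linear_combination by_parts

theorem integral_cos_add_one_mul_mul_log_sin_half (n : ℕ) :
    ∫ θ in 0..π, cos ((n + 1) * θ) * log (sin (θ / 2)) = -π / (2 * (n + 1)) := by
  have h := add_one_mul_integral_cos_add_one_mul_mul_log_sin_half n
  rw [integral_eval_one_add_X_mul_U_measureT, Int.cast_natCast] at h
  rw [← div_div, ← h, mul_div_cancel_left₀ _ n.cast_add_one_ne_zero]

/-- Both sides are `0` where the logarithms are singular, since `x / 0 = 0` and `log 0 = 0`. -/
theorem log_two_div_one_sub_cos (θ : ℝ) : log (2 / (1 - cos θ)) = -2 * log (sin (θ / 2)) := by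
  have one_sub_cos : 1 - cos θ = 2 * sin (θ / 2) ^ 2 := by
    rw [sin_sq_eq_half_sub, mul_div_cancel₀ θ two_ne_zero]
    ring
  rw [one_sub_cos, div_mul_cancel_left₀ two_ne_zero, log_inv, log_pow]
  push_cast
  ring

theorem integral_mul_logChebyshev_weight (f : ℝ → ℝ) :
    ∫ x in (-1)..1, f x * (log (2 / (1 - x)) * (1 - x ^ 2) ^ (-(1 / 2) : ℝ)) =
      -2 * ∫ θ in 0..π, f (cos θ) * log (sin (θ / 2)) := calc
  _ = ∫ x in (-1)..1, f x * log (2 / (1 - x)) * √(1 - x ^ 2)⁻¹ := by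
    refine intervalIntegral.integral_congr fun x hx ↦ ?_
    rw [Set.uIcc_of_le (by norm_num)] at hx
    have one_sub_sq_nonneg : 0 ≤ 1 - x ^ 2 := by nlinarith [hx.1, hx.2]
    simp only [rpow_neg one_sub_sq_nonneg, ← sqrt_eq_rpow, sqrt_inv, mul_assoc]
  _ = ∫ θ in 0..π, f (cos θ) * log (2 / (1 - cos θ)) := by
    rw [← integral_measureT, integral_measureT_eq_integral_cos]
  _ = -2 * ∫ θ in 0..π, f (cos θ) * log (sin (θ / 2)) := by
    simp only [log_two_div_one_sub_cos, mul_left_comm _ (-2 : ℝ),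
      intervalIntegral.integral_const_mul]

end

/-- The modified Chebyshev moments of the log-Chebyshev weight
`log(2/(1-x)) (1-x²)^{-1/2}`: `2π log 2` for `n = 0` and `π/n` for `n ≥ 1`. -/
theorem logChebyshev_weighted_moments (n : ℕ) :
    (n = 0 →
      ∫ x in (-1 : ℝ)..1,
        (Polynomial.Chebyshev.T ℝ n).eval x * (Real.log (2 / (1 - x)) * (1 - x ^ 2) ^ (-(1 / 2) : ℝ))
        = 2 * Real.pi * Real.log 2) ∧
    (1 ≤ n →
      ∫ x in (-1 : ℝ)..1,
        (Polynomial.Chebyshev.T ℝ n).eval x * (Real.log (2 / (1 - x)) * (1 - x ^ 2) ^ (-(1 / 2) : ℝ))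
        = Real.pi / n) := by
  rw [integral_mul_logChebyshev_weight]
  simp only [Chebyshev.T_real_cos, Int.cast_natCast]
  constructor
  · rintro rfl
    simp only [Nat.cast_zero, zero_mul, cos_zero, one_mul, integral_log_sin_half_zero_pi]
    ring
  · intro hn
    obtain ⟨k, rfl⟩ := Nat.exists_eq_add_of_le' hn
    rw [Nat.cast_succ, integral_cos_add_one_mul_mul_log_sin_half]
    field
end

section
/- Let μ_n = ∫_{−1}^{1} T_n(x) · log(2/(1−x)) dx, where T_n is the Chebyshev polynomial of the first kind. Then μ₀ = 2, μ₁ = 1, and for every n ≥ 1: (n+2)·μ_{n+1} − (n−2)·μ_{n−1} = 4/(1−n²) if n is even, and (n+2)·μ_{n+1} − (n−2)·μ_{n−1} = 4/(4−n²) if n is odd. -/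
open Polynomial MeasureTheory

/-!
For polynomials `P`, integration by parts against `w(x) = log (2 / (1 - x))` gives
`∫ d/dx[(x - 1) P] w = ∫ P` over `[-1, 1]`: the factor `x - 1` kills the boundary term at the
singularity, `w(-1) = 0` kills the other one, and `(x - 1) dw/dx = -1`. The choice
`P = 2 (X + 1) T_n` produces the recurrence, since `d/dx[2 (x² - 1) T_n]` is
`(n + 2) T_{n+1} - (n - 2) T_{n-1}`, while `∫ P` follows from
`2 (X + 1) T_n = 2 T_n + T_{n+1} + T_{n-1}`. For even `n` only `∫ T_n` survives, for odd `n` only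
`∫ T_{n±1}`. At `n = 0` the recurrence reads `2 μ₁ + 2 μ₋₁ = 4`, which is the value of `μ₁`.
-/

lemma log_div_eq_neg_log_div (x y : ℝ) : Real.log (x / y) = -Real.log (y / x) := by
  rw [← Real.log_inv, inv_div]

lemma intervalIntegrable_log_div_sub (a b c d : ℝ) :
    IntervalIntegrable (fun x => Real.log (c / (d - x))) volume a b := by
  rcases eq_or_ne c 0 with rfl | hc
  · simp
  · have hlog : IntervalIntegrable (fun x => Real.log (x * c⁻¹)) volume (d - a) (d - b) := by
      have := (intervalIntegral.intervalIntegrable_log' (a := (d - a) * c⁻¹)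
        (b := (d - b) * c⁻¹)).comp_mul_right (c := c⁻¹)
      simpa [hc] using this
    simpa only [sub_sub_cancel, log_div_eq_neg_log_div c, div_eq_mul_inv (_ - _)] using!
      (hlog.comp_sub_left d).neg

lemma continuous_sub_mul_log_div_sub (b c : ℝ) :
    Continuous fun x => (x - b) * Real.log (c / (b - x)) := by
  rcases eq_or_ne c 0 with rfl | hc
  · simpa using continuous_const
  · have h : Continuous fun x => c * ((b - x) / c * Real.log ((b - x) / c)) :=
      continuous_const.mul (Real.continuous_mul_log.comp (by fun_prop))
    refine h.congr fun x => ?_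
    rw [log_div_eq_neg_log_div c]
    field_simp
    ring

lemma hasDerivAt_sub_mul_log_div_sub {b c x : ℝ} (hc : c ≠ 0) (hx : x ≠ b) :
    HasDerivAt (fun x => (x - b) * Real.log (c / (b - x))) (Real.log (c / (b - x)) - 1) x := by
  have hbx : b - x ≠ 0 := sub_ne_zero.2 hx.symm
  have hlog : HasDerivAt (fun x => Real.log (c / (b - x))) (1 / (b - x)) x := by
    simp only [log_div_eq_neg_log_div c]
    have hdiv := ((hasDerivAt_id x).const_sub b).div_const c
    refine (hdiv.log (div_ne_zero hbx hc)).neg.congr_deriv ?_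
    simp only [id]
    field_simp
  refine (((hasDerivAt_id x).sub_const b).mul hlog).congr_deriv ?_
  simp only [id]
  field_simp
  ring

theorem integral_add_sub_mul_deriv_mul_log {a b : ℝ} {f f' : ℝ → ℝ}
    (hf : ContinuousOn f (Set.uIcc a b))
    (hff' : ∀ x ∈ Set.Ioo (min a b) (max a b), HasDerivAt f (f' x) x)
    (hf' : IntervalIntegrable f' volume a b) :
    ∫ x in a..b, (f x + (x - b) * f' x) * Real.log ((b - a) / (b - x)) = ∫ x in a..b, f x := by
  rcases eq_or_ne a b with rfl | hab
  · simp only [intervalIntegral.integral_same]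
  set w : ℝ → ℝ := fun x => Real.log ((b - a) / (b - x))
  set v : ℝ → ℝ := fun x => (x - b) * w x
  have hw : IntervalIntegrable w volume a b := intervalIntegrable_log_div_sub a b (b - a) b
  have hv : Continuous v := continuous_sub_mul_log_div_sub b (b - a)
  have hvw : ∀ x ∈ Set.Ioo (min a b) (max a b), HasDerivAt v (w x - 1) x := fun x hx =>
    hasDerivAt_sub_mul_log_div_sub (sub_ne_zero.2 hab.symm) (by grind)
  have hva : v a = 0 := by simp [v, w, sub_ne_zero.2 hab.symm]
  have hvb : v b = 0 := by simp [v]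
  have hparts := intervalIntegral.integral_deriv_mul_eq_sub_of_hasDerivAt hf hv.continuousOn hff'
    hvw hf' (hw.sub intervalIntegrable_const)
  rw [hva, hvb, mul_zero, mul_zero, sub_zero] at hparts
  rw [← sub_eq_zero, ← intervalIntegral.integral_sub _ hf.intervalIntegrable, ← hparts]
  · congr with x
    ring
  · refine ((hw.continuousOn_mul hf).add (hf'.mul_continuousOn hv.continuousOn)).congr ?_
    exact fun x _ => by ring

/-- The linear functional `P ↦ ∫_{-1}^1 P(x) log (2 / (1 - x)) dx` on real polynomials, whose
values at the Chebyshev polynomials are the modified moments `μ_n`. Taking all polynomials as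
arguments turns relations between polynomials into relations between moments. -/
noncomputable def logMoment : ℝ[X] →ₗ[ℝ] ℝ where
  toFun P := ∫ x in (-1 : ℝ)..1, P.eval x * Real.log (2 / (1 - x))
  map_add' P Q := by
    have hint (P : ℝ[X]) := (intervalIntegrable_log_div_sub (-1) 1 2 1).continuousOn_mul
      P.continuousOn
    simp only [eval_add, add_mul, intervalIntegral.integral_add (hint P) (hint Q)]
  map_smul' r P := by
    simp only [eval_smul, smul_eq_mul, mul_assoc, intervalIntegral.integral_const_mul,
      RingHom.id_apply]

theorem logMoment_apply (P : ℝ[X]) :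
    logMoment P = ∫ x in (-1 : ℝ)..1, P.eval x * Real.log (2 / (1 - x)) := rfl

theorem logMoment_derivative_X_sub_one_mul (P : ℝ[X]) :
    logMoment (derivative ((X - 1) * P)) = ∫ x in (-1 : ℝ)..1, P.eval x := by
  rw [logMoment_apply, ← integral_add_sub_mul_deriv_mul_log P.continuousOn
    (fun x _ => P.hasDerivAt x) ((derivative P).continuous.intervalIntegrable _ _)]
  norm_num [derivative_mul]

lemma two_mul_X_add_one_mul_chebyshev_T (R : Type*) [CommRing R] (n : ℤ) :
    2 * (X + 1) * Chebyshev.T R n =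
      2 * Chebyshev.T R n + Chebyshev.T R (n + 1) + Chebyshev.T R (n - 1) := by
  rw [Chebyshev.T_add_one]
  ring

lemma derivative_X_sub_one_mul_two_mul_X_add_one_mul_chebyshev_T (R : Type*) [CommRing R] (n : ℤ) :
    derivative ((X - 1) * (2 * (X + 1) * Chebyshev.T R n)) =
      ((n : R) + 2) • Chebyshev.T R (n + 1) - ((n : R) - 2) • Chebyshev.T R (n - 1) := by
  have h := Chebyshev.one_sub_X_sq_mul_derivative_T_eq_poly_in_T (R := R) (n - 1)
  simp only [sub_add_cancel, Int.cast_sub, Int.cast_one] at h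
  simp only [derivative_mul, derivative_X, derivative_one, derivative_ofNat, smul_eq_C_mul, map_add,
    map_sub, map_intCast, map_ofNat]
  linear_combination -2 * h + ((n : R[X]) + 2) * -Chebyshev.T_add_one R n

lemma derivative_X_mul_chebyshev_T_add (R : Type*) [CommRing R] (n : ℤ) :
    derivative (X * Chebyshev.T R n + (1 - X ^ 2) * derivative (Chebyshev.T R n)) =
      (1 - (n : R[X]) ^ 2) * Chebyshev.T R n := by
  have h := Chebyshev.one_sub_X_sq_mul_derivative_derivative_T_eq_poly_in_T (R := R) n
  simp only [Function.iterate_succ, Function.iterate_zero, Function.comp, id] at h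
  simp only [derivative_add, derivative_mul, derivative_X, derivative_sub, derivative_one,
    derivative_X_pow, Nat.cast_ofNat, map_ofNat]
  linear_combination h

theorem one_sub_sq_mul_integral_chebyshev_T (n : ℤ) :
    (1 - (n : ℝ) ^ 2) * ∫ x in (-1 : ℝ)..1, (Chebyshev.T ℝ n).eval x =
      1 + ((n.negOnePow : ℤ) : ℝ) := by
  have h := intervalIntegral.integral_eq_sub_of_hasDerivAt (a := -1) (b := 1)
    (fun x _ => (X * Chebyshev.T ℝ n + (1 - X ^ 2) * derivative (Chebyshev.T ℝ n)).hasDerivAt x)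
    ((Polynomial.continuous _).intervalIntegrable _ _)
  rw [derivative_X_mul_chebyshev_T_add] at h
  rw [← intervalIntegral.integral_const_mul]
  simpa using h

theorem integral_chebyshev_T_of_even {n : ℤ} (hn : Even n) :
    ∫ x in (-1 : ℝ)..1, (Chebyshev.T ℝ n).eval x = 2 / (1 - (n : ℝ) ^ 2) := by
  have hn_sq_even : Even (n ^ 2) := hn.pow_of_ne_zero two_ne_zero
  have hn_sq : 1 - (n : ℝ) ^ 2 ≠ 0 := by exact_mod_cast (by grind : 1 - n ^ 2 ≠ 0)
  rw [eq_div_iff hn_sq, mul_comm, one_sub_sq_mul_integral_chebyshev_T, Int.negOnePow_even n hn]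
  norm_num

theorem integral_chebyshev_T_of_odd {n : ℤ} (hn : Odd n) :
    ∫ x in (-1 : ℝ)..1, (Chebyshev.T ℝ n).eval x = 0 := by
  -- `one_sub_sq_mul_integral_chebyshev_T` says nothing at `n = ±1`, hence the use of parity.
  have h := intervalIntegral.integral_comp_neg (a := -1) (b := 1)
    fun x => (Chebyshev.T ℝ n).eval x
  simp only [Chebyshev.T_eval_neg, Int.negOnePow_odd n hn, Units.val_neg, Units.val_one,
    Int.cast_neg, Int.cast_one, neg_one_mul, intervalIntegral.integral_neg, neg_neg] at h
  exact neg_eq_self.1 h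

lemma integral_two_mul_X_add_one_mul_chebyshev_T (a b : ℝ) (n : ℤ) :
    ∫ x in a..b, (2 * (X + 1) * Chebyshev.T ℝ n).eval x =
      2 * (∫ x in a..b, (Chebyshev.T ℝ n).eval x) +
      (∫ x in a..b, (Chebyshev.T ℝ (n + 1)).eval x) +
      ∫ x in a..b, (Chebyshev.T ℝ (n - 1)).eval x := by
  have hint (P : ℝ[X]) : IntervalIntegrable (fun x => P.eval x) volume a b :=
    P.continuous.intervalIntegrable a b
  simp only [two_mul_X_add_one_mul_chebyshev_T, eval_add, eval_mul, eval_ofNat]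
  rw [intervalIntegral.integral_add (((hint _).const_mul 2).add (hint _)) (hint _),
    intervalIntegral.integral_add ((hint _).const_mul 2) (hint _),
    intervalIntegral.integral_const_mul]

theorem logMoment_chebyshev_T_recurrence (n : ℤ) :
    ((n : ℝ) + 2) * logMoment (Chebyshev.T ℝ (n + 1)) -
        ((n : ℝ) - 2) * logMoment (Chebyshev.T ℝ (n - 1)) =
      2 * (∫ x in (-1 : ℝ)..1, (Chebyshev.T ℝ n).eval x) +
      (∫ x in (-1 : ℝ)..1, (Chebyshev.T ℝ (n + 1)).eval x) +
      ∫ x in (-1 : ℝ)..1, (Chebyshev.T ℝ (n - 1)).eval x := by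
  simp only [← smul_eq_mul, ← map_smul, ← map_sub]
  rw [← derivative_X_sub_one_mul_two_mul_X_add_one_mul_chebyshev_T,
    logMoment_derivative_X_sub_one_mul, integral_two_mul_X_add_one_mul_chebyshev_T, smul_eq_mul]

theorem logMoment_chebyshev_T_recurrence_of_even {n : ℤ} (hn : Even n) :
    ((n : ℝ) + 2) * logMoment (Chebyshev.T ℝ (n + 1)) -
        ((n : ℝ) - 2) * logMoment (Chebyshev.T ℝ (n - 1)) = 4 / (1 - (n : ℝ) ^ 2) := by
  rw [logMoment_chebyshev_T_recurrence, integral_chebyshev_T_of_even hn,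
    integral_chebyshev_T_of_odd hn.add_one, integral_chebyshev_T_of_odd (hn.sub_odd odd_one)]
  ring

theorem logMoment_chebyshev_T_recurrence_of_odd {n : ℤ} (hn : Odd n) :
    ((n : ℝ) + 2) * logMoment (Chebyshev.T ℝ (n + 1)) -
        ((n : ℝ) - 2) * logMoment (Chebyshev.T ℝ (n - 1)) = 4 / (4 - (n : ℝ) ^ 2) := by
  rw [logMoment_chebyshev_T_recurrence, integral_chebyshev_T_of_odd hn,
    integral_chebyshev_T_of_even hn.add_one, integral_chebyshev_T_of_even (hn.sub_odd odd_one)]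
  have hn_zero : (n : ℝ) ≠ 0 := by exact_mod_cast (by grind : n ≠ 0)
  have hn_sub : 2 - (n : ℝ) ≠ 0 := by exact_mod_cast (by grind : 2 - n ≠ 0)
  have hn_add : 2 + (n : ℝ) ≠ 0 := by exact_mod_cast (by grind : 2 + n ≠ 0)
  have h_succ : 1 - ((n + 1 : ℤ) : ℝ) ^ 2 = -(n * (2 + n)) := by push_cast; ring
  have h_pred : 1 - ((n - 1 : ℤ) : ℝ) ^ 2 = n * (2 - n) := by push_cast; ring
  have h_self : 4 - (n : ℝ) ^ 2 = (2 - n) * (2 + n) := by ring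
  rw [h_succ, h_pred, h_self]
  field_simp
  ring

theorem logMoment_one : logMoment 1 = 2 := by
  calc logMoment 1 = logMoment (derivative ((X - 1) * 1)) := by simp
    _ = ∫ x in (-1 : ℝ)..1, (1 : ℝ[X]).eval x := logMoment_derivative_X_sub_one_mul 1
    _ = 2 := by norm_num

theorem logMoment_X : logMoment X = 1 := by
  have h := logMoment_chebyshev_T_recurrence_of_even (n := 0) Even.zero
  simp only [Int.cast_zero, zero_add, zero_sub, Chebyshev.T_one, Chebyshev.T_neg_one] at h
  linarith

/-- The modified Chebyshev moments `μ_n = ∫_{-1}^1 T_n(x) log(2/(1-x)) dx`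
satisfy `μ₀ = 2`, `μ₁ = 1`, and for `n ≥ 1` the three-term recurrence
`(n+2) μ_{n+1} - (n-2) μ_{n-1} = 4/(1-n²)` for even `n` and `= 4/(4-n²)` for odd `n`. -/
theorem logweight_moment_recurrence
    (μ : ℕ → ℝ)
    (hμ : ∀ n : ℕ, μ n = ∫ x in (-1 : ℝ)..1,
      (Polynomial.Chebyshev.T ℝ n).eval x * Real.log (2 / (1 - x))) :
    μ 0 = 2 ∧ μ 1 = 1 ∧ ∀ n : ℕ, 1 ≤ n →
      (Even n →
        ((n : ℝ) + 2) * μ (n + 1) - ((n : ℝ) - 2) * μ (n - 1) = 4 / (1 - (n : ℝ) ^ 2)) ∧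
      (Odd n →
        ((n : ℝ) + 2) * μ (n + 1) - ((n : ℝ) - 2) * μ (n - 1) = 4 / (4 - (n : ℝ) ^ 2)) := by
  obtain rfl : μ = fun n : ℕ => logMoment (Chebyshev.T ℝ n) := funext hμ
  refine ⟨by simpa using logMoment_one, by simpa using logMoment_X, fun n hn => ?_⟩
  push_cast [hn]
  exact ⟨fun h => logMoment_chebyshev_T_recurrence_of_even (n := n) (by exact_mod_cast h),
    fun h => logMoment_chebyshev_T_recurrence_of_odd (n := n) (by exact_mod_cast h)⟩
end

section
/- Let μ_n = ∫_{−1}^{1} T_n(x) · log(2/(1−x)) dx, where T_n is the Chebyshev polynomial of the first kind. Then for every n ≥ 0: (1 − 4n²)·μ_{2n} = 2 − Σ_{k=0}^{n−1} 4(2k+1)/(4−(2k+1)²). -/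
open Polynomial MeasureTheory

/-!
The polynomial `(1 - (m + 1)²) T_{m+1} - (1 - (m - 1)²) T_{m-1}` is the derivative of
`2m (1 - x²) T_m(x)`, which vanishes at the logarithmic singularity `x = 1`. Integrating by parts
against `log (2 / (1 - x))` therefore removes the logarithm and leaves `-2m ∫ (1 + x) T_m(x) dx`.
For odd `m` the term `∫ T_m` vanishes by parity, and the Chebyshev differential equation yields
an explicit antiderivative of `(4 - m²) x T_m(x)`. The resulting recurrence telescopes.
-/

namespace ChebyshevLogMoment

section Integrals

open Set

theorem integral_neg_self_eq_zero_of_odd {E : Type*} [NormedAddCommGroup E] [NormedSpace ℝ E]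
    {f : ℝ → E} (hf : f.Odd) (a : ℝ) : ∫ x in -a..a, f x = 0 := by
  have : IsAddTorsionFree E := .of_isTorsionFree ℝ E
  have hreflect : ∫ x in -a..a, f (-x) = ∫ x in -a..a, f x := by
    rw [intervalIntegral.integral_comp_neg, neg_neg]
  simp only [hf _, intervalIntegral.integral_neg] at hreflect
  exact self_eq_neg.mp hreflect.symm

theorem integral_eval_derivative (p : ℝ[X]) (a b : ℝ) :
    ∫ x in a..b, p.derivative.eval x = p.eval b - p.eval a :=
  intervalIntegral.integral_eq_sub_of_hasDerivAt (fun x _ => p.hasDerivAt x)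
    (p.derivative.continuous.intervalIntegrable a b)

theorem intervalIntegrable_log_const_div_sub (c d a b : ℝ) :
    IntervalIntegrable (fun x => Real.log (c / (d - x))) volume a b :=
  MeromorphicOn.intervalIntegrable_log fun _ _ => by fun_prop

theorem sub_mul_log_div_sub {c : ℝ} (hc : c ≠ 0) (d x : ℝ) :
    (x - d) * Real.log (c / (d - x)) = c * ((d - x) / c * Real.log ((d - x) / c)) := by
  rw [← inv_div, Real.log_inv]
  field_simp
  ring

theorem continuous_sub_mul_log_div_sub {c : ℝ} (hc : c ≠ 0) (d : ℝ) :
    Continuous fun x => (x - d) * Real.log (c / (d - x)) := by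
  simp only [sub_mul_log_div_sub hc]
  fun_prop

theorem hasDerivAt_sub_mul_log_div_sub {c d x : ℝ} (hc : c ≠ 0) (hx : x ≠ d) :
    HasDerivAt (fun x => (x - d) * Real.log (c / (d - x))) (Real.log (c / (d - x)) - 1) x := by
  have hratio : (d - x) / c ≠ 0 := div_ne_zero (sub_ne_zero.mpr hx.symm) hc
  have hinner : HasDerivAt (fun x => (d - x) / c) (-1 / c) x :=
    ((hasDerivAt_id x).const_sub d).div_const c
  simp only [sub_mul_log_div_sub hc]
  refine (((Real.hasDerivAt_mul_log hratio).comp x hinner).const_mul c).congr_deriv ?_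
  rw [← inv_div, Real.log_inv]
  field_simp
  ring

theorem integral_add_sub_mul_deriv_mul_log {a b : ℝ} {u u' : ℝ → ℝ}
    (hu : ContinuousOn u (uIcc a b))
    (huu' : ∀ x ∈ Ioo (min a b) (max a b), HasDerivAt u (u' x) x)
    (hu' : IntervalIntegrable u' volume a b) :
    ∫ x in a..b, (u x + (x - b) * u' x) * Real.log ((b - a) / (b - x)) = ∫ x in a..b, u x := by
  rcases eq_or_ne a b with rfl | hab
  · simp only [intervalIntegral.integral_same]
  have hba : b - a ≠ 0 := sub_ne_zero.mpr hab.symm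
  let w : ℝ → ℝ := fun x => Real.log ((b - a) / (b - x))
  let v : ℝ → ℝ := fun x => (x - b) * w x
  have hw : IntervalIntegrable w volume a b := intervalIntegrable_log_const_div_sub _ _ _ _
  have hv : ContinuousOn v (uIcc a b) := (continuous_sub_mul_log_div_sub hba b).continuousOn
  have hvv' : ∀ x ∈ Ioo (min a b) (max a b), HasDerivAt v (w x - 1) x := by
    rintro x ⟨hmin, hmax⟩
    refine hasDerivAt_sub_mul_log_div_sub hba ?_
    rintro rfl
    grind
  have hva : v a = 0 := by simp [v, w, hba]
  have hvb : v b = 0 := by simp [v]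
  have hparts := intervalIntegral.integral_mul_deriv_eq_deriv_mul_of_hasDerivAt hu hv huu' hvv' hu'
    (hw.sub intervalIntegrable_const)
  have huw : IntervalIntegrable (fun x => u x * (w x - 1)) volume a b :=
    (hw.sub intervalIntegrable_const).continuousOn_mul hu
  calc ∫ x in a..b, (u x + (x - b) * u' x) * w x
      = ∫ x in a..b, u x * (w x - 1) + u' x * v x + u x := by
        congr! 2 with x
        ring
    _ = (∫ x in a..b, u x * (w x - 1)) + (∫ x in a..b, u' x * v x) + ∫ x in a..b, u x := by
        rw [intervalIntegral.integral_add (huw.add (hu'.mul_continuousOn hv))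
          hu.intervalIntegrable, intervalIntegral.integral_add huw (hu'.mul_continuousOn hv)]
    _ = ∫ x in a..b, u x := by
        rw [hparts, hva, hvb]
        ring

theorem integral_eval_derivative_X_sub_C_mul_mul_log (q : ℝ[X]) (a b : ℝ) :
    ∫ x in a..b, (derivative ((X - C b) * q)).eval x * Real.log ((b - a) / (b - x)) =
      ∫ x in a..b, q.eval x := by
  rw [← integral_add_sub_mul_deriv_mul_log q.continuous.continuousOn (fun x _ => q.hasDerivAt x)
    (q.derivative.continuous.intervalIntegrable a b)]
  simp

end Integrals

section Identities

variable {R : Type*} [CommRing R]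

open Chebyshev

theorem derivative_two_mul_one_sub_X_sq_mul_T (m : ℤ) :
    derivative (2 * (m : R[X]) * ((1 - X ^ 2) * T R m)) =
      (1 - ((m : R[X]) + 1) ^ 2) * T R (m + 1) - (1 - ((m : R[X]) - 1) ^ 2) * T R (m - 1) := by
  have hT' := one_sub_X_sq_mul_derivative_T_eq_poly_in_T (R := R) (m - 1)
  have hT := T_add_one R m
  simp only [sub_add_cancel] at hT'
  push_cast at hT'
  simp only [derivative_mul, derivative_sub, derivative_one, derivative_X_pow, derivative_intCast,
    derivative_ofNat, C_eq_natCast]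
  push_cast
  linear_combination 2 * (m : R[X]) * hT' - (1 - ((m : R[X]) + 1) ^ 2) * hT

theorem four_sub_sq_mul_X_mul_T_eq_derivative (m : ℤ) :
    (4 - (m : R[X]) ^ 2) * (X * T R m) =
      derivative ((2 * X ^ 2 - 1) * T R m + X * (1 - X ^ 2) * derivative (T R m)) := by
  have hode := one_sub_X_sq_mul_derivative_derivative_T_eq_poly_in_T (R := R) m
  simp only [Function.iterate_succ, Function.iterate_zero, Function.comp_apply, id] at hode
  simp only [derivative_add, derivative_mul, derivative_sub, derivative_one, derivative_X_pow,
    derivative_X, derivative_ofNat, C_eq_natCast]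
  push_cast
  linear_combination -X * hode

end Identities

section Moments

open Chebyshev

theorem integral_T_of_odd {m : ℤ} (hm : Odd m) : ∫ x in (-1 : ℝ)..1, (T ℝ m).eval x = 0 :=
  integral_neg_self_eq_zero_of_odd (fun x => by simp [T_eval_neg, Int.negOnePow_odd m hm]) 1

theorem four_sub_sq_mul_integral_mul_T (m : ℤ) :
    (4 - (m : ℝ) ^ 2) * ∫ x in (-1 : ℝ)..1, x * (T ℝ m).eval x = 1 - m.negOnePow := by
  let G : ℝ[X] := (2 * X ^ 2 - 1) * T ℝ m + X * (1 - X ^ 2) * derivative (T ℝ m)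
  have hG : derivative G = (4 - (m : ℝ[X]) ^ 2) * (X * T ℝ m) :=
    (four_sub_sq_mul_X_mul_T_eq_derivative m).symm
  calc (4 - (m : ℝ) ^ 2) * ∫ x in (-1 : ℝ)..1, x * (T ℝ m).eval x
      = ∫ x in (-1 : ℝ)..1, (derivative G).eval x := by
        simp [hG]
    _ = G.eval 1 - G.eval (-1) := integral_eval_derivative G (-1) 1
    _ = 1 - m.negOnePow := by
        norm_num [G, T_eval_neg_one]

theorem integral_one_add_mul_T_of_odd {m : ℤ} (hm : Odd m) :
    ∫ x in (-1 : ℝ)..1, (1 + x) * (T ℝ m).eval x = 2 / (4 - (m : ℝ) ^ 2) := by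
  have hne : 4 - (m : ℝ) ^ 2 ≠ 0 := by
    have hne_int : 4 - m ^ 2 ≠ 0 := by
      intro h
      have hsq : Even (m ^ 2) := ⟨2, by linarith⟩
      exact Int.not_even_iff_odd.mpr hm.pow hsq
    exact_mod_cast hne_int
  have hT : IntervalIntegrable (fun x => (T ℝ m).eval x) volume (-1) 1 :=
    (T ℝ m).continuous.intervalIntegrable _ _
  have hmoment := four_sub_sq_mul_integral_mul_T m
  rw [Int.negOnePow_odd m hm] at hmoment
  simp only [add_mul, one_mul]
  rw [intervalIntegral.integral_add hT (hT.continuousOn_mul (continuousOn_id' _)),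
    integral_T_of_odd hm, zero_add, eq_div_iff hne, mul_comm, hmoment]
  norm_num

/-- The modified Chebyshev moment `μ_m` of the weight `log (2 / (1 - x))`. The index is allowed to
be any integer, as for `Polynomial.Chebyshev.T`. -/
noncomputable def logMoment (m : ℤ) : ℝ :=
  ∫ x in (-1 : ℝ)..1, (T ℝ m).eval x * Real.log (2 / (1 - x))

theorem logMoment_zero : logMoment 0 = 2 := by
  calc logMoment 0
      = ∫ x in (-1 : ℝ)..1,
          (derivative ((X - C 1) * 1)).eval x * Real.log ((1 - -1) / (1 - x)) := by
        simp [logMoment, one_add_one_eq_two]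
    _ = ∫ x in (-1 : ℝ)..1, (1 : ℝ[X]).eval x :=
        integral_eval_derivative_X_sub_C_mul_mul_log 1 (-1) 1
    _ = 2 := by norm_num

theorem logMoment_recurrence (m : ℤ) :
    (1 - ((m : ℝ) + 1) ^ 2) * logMoment (m + 1) - (1 - ((m : ℝ) - 1) ^ 2) * logMoment (m - 1) =
      -(2 * m) * ∫ x in (-1 : ℝ)..1, (1 + x) * (T ℝ m).eval x := by
  let w : ℝ → ℝ := fun x => Real.log (2 / (1 - x))
  let q : ℝ[X] := -(2 * (m : ℝ[X])) * ((1 + X) * T ℝ m)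
  have hTw (k : ℤ) : IntervalIntegrable (fun x => (T ℝ k).eval x * w x) volume (-1) 1 :=
    (intervalIntegrable_log_const_div_sub 2 1 (-1) 1).continuousOn_mul (T ℝ k).continuousOn
  have hq : derivative ((X - C 1) * q) =
      (1 - ((m : ℝ[X]) + 1) ^ 2) * T ℝ (m + 1) - (1 - ((m : ℝ[X]) - 1) ^ 2) * T ℝ (m - 1) := by
    rw [← derivative_two_mul_one_sub_X_sq_mul_T]
    congr 1
    simp only [q, map_one]
    ring
  calc (1 - ((m : ℝ) + 1) ^ 2) * logMoment (m + 1) - (1 - ((m : ℝ) - 1) ^ 2) * logMoment (m - 1)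
      = ∫ x in (-1 : ℝ)..1, (derivative ((X - C 1) * q)).eval x * w x := by
        rw [logMoment, logMoment, ← intervalIntegral.integral_const_mul,
          ← intervalIntegral.integral_const_mul,
          ← intervalIntegral.integral_sub ((hTw _).const_mul _) ((hTw _).const_mul _), hq]
        simp [w, sub_mul, mul_assoc]
    _ = ∫ x in (-1 : ℝ)..1, q.eval x := by
        rw [← integral_eval_derivative_X_sub_C_mul_mul_log, sub_neg_eq_add, one_add_one_eq_two]
    _ = -(2 * m) * ∫ x in (-1 : ℝ)..1, (1 + x) * (T ℝ m).eval x := by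
        simp [q]

theorem logMoment_even_recurrence (n : ℤ) :
    (1 - 4 * ((n : ℝ) + 1) ^ 2) * logMoment (2 * (n + 1)) =
      (1 - 4 * (n : ℝ) ^ 2) * logMoment (2 * n) -
        4 * (2 * (n : ℝ) + 1) / (4 - (2 * (n : ℝ) + 1) ^ 2) := by
  have hrec := logMoment_recurrence (2 * n + 1)
  rw [integral_one_add_mul_T_of_odd (odd_two_mul_add_one n), add_sub_cancel_right,
    show 2 * n + 1 + 1 = 2 * (n + 1) by ring] at hrec
  push_cast at hrec
  linear_combination hrec

end Moments

end ChebyshevLogMoment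

/-- For the moments `μ_n = ∫_{-1}^1 T_n(x) log(2/(1-x)) dx`, the even
moments satisfy `(1 - 4n²) μ_{2n} = 2 - ∑_{k=0}^{n-1} 4(2k+1)/(4-(2k+1)²)`. -/
theorem logweight_even_moments
    (μ : ℕ → ℝ)
    (hμ : ∀ n : ℕ, μ n = ∫ x in (-1 : ℝ)..1,
      (Polynomial.Chebyshev.T ℝ n).eval x * Real.log (2 / (1 - x))) :
    ∀ n : ℕ, (1 - 4 * (n : ℝ) ^ 2) * μ (2 * n)
      = 2 - ∑ k ∈ Finset.range n, 4 * (2 * (k : ℝ) + 1) / (4 - (2 * (k : ℝ) + 1) ^ 2) := by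
  intro n
  have hμ' (k : ℕ) : μ k = ChebyshevLogMoment.logMoment k := hμ k
  induction n with
  | zero => simp [hμ', ChebyshevLogMoment.logMoment_zero]
  | succ n ih =>
    have hrec := ChebyshevLogMoment.logMoment_even_recurrence n
    rw [hμ'] at ih ⊢
    rw [Finset.sum_range_succ, ← sub_sub, ← ih]
    exact_mod_cast hrec
end

section
/- Let μ_n = ∫_{−1}^{1} T_n(x) · log(2/(1−x)) dx, where T_n is the Chebyshev polynomial of the first kind. Then for every n ≥ 0: 2n(2n+2)·μ_{2n+1} = Σ_{k=0}^{n−1} 4(2k+2)/(1−(2k+2)²). -/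
open Polynomial MeasureTheory

/-!
The polynomial `A = n T_{n+2} - (n+2) T_n + 2` is an antiderivative of `2n(n+2) T_{n+1}` that
vanishes at `1`, and the Chebyshev recurrence, telescoped, gives
`A = -2 (1 - X) ∑_{k<n} ((k+1) T_{k+2} + (k+2) T_{k+1})`. Integrating by parts against
`log (2 / (1 - x))`, whose derivative is `1 / (1 - x)`, therefore cancels the singularity and turns
each moment into a combination of the integrals `∫ T_m`. These vanish for odd `m` and equal
`2 / (1 - m²)` for even `m`; for odd moments, pairing consecutive summands leaves the stated sum.
-/

namespace ChebyshevLogMoments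

open Set
open Polynomial.Chebyshev hiding C

theorem sum_range_two_mul {M : Type*} [AddCommMonoid M] (f : ℕ → M) (n : ℕ) :
    ∑ k ∈ Finset.range (2 * n), f k = ∑ k ∈ Finset.range n, (f (2 * k) + f (2 * k + 1)) := by
  induction n with
  | zero => simp
  | succ n ih =>
    rw [Nat.mul_succ, Finset.sum_range_succ, Finset.sum_range_succ, ih, Finset.sum_range_succ,
      add_assoc]

theorem mul_log_div_eq_mul_negMulLog (c y : ℝ) :
    y * Real.log (c / y) = c * Real.negMulLog (y / c) := by
  rcases eq_or_ne c 0 with rfl | hc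
  · simp
  · rw [← inv_div, Real.log_inv, Real.negMulLog]
    field_simp

theorem continuous_mul_log_div (c : ℝ) : Continuous fun y : ℝ ↦ y * Real.log (c / y) := by
  simp only [mul_log_div_eq_mul_negMulLog]
  fun_prop

theorem intervalIntegrable_log_div_sub (a b c d : ℝ) :
    IntervalIntegrable (fun x ↦ Real.log (c / (d - x))) volume a b :=
  MeromorphicOn.intervalIntegrable_log (f := fun x ↦ c / (d - x)) fun x _ ↦ by fun_prop

theorem hasDerivAt_log_div_sub {c d x : ℝ} (hc : c ≠ 0) (hx : d - x ≠ 0) :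
    HasDerivAt (fun x ↦ Real.log (c / (d - x))) (1 / (d - x)) x := by
  have hquot : HasDerivAt (fun x ↦ c / (d - x)) (c / (d - x) ^ 2) x := by
    simpa using (hasDerivAt_const x c).fun_div ((hasDerivAt_id' x).const_sub d) hx
  refine (hquot.log (div_ne_zero hc hx)).congr_deriv ?_
  field_simp

theorem integral_deriv_mul_log_div_sub {a b : ℝ} (hab : a < b) {f f' g : ℝ → ℝ}
    (hg : ContinuousOn g (Icc a b)) (hfg : ∀ x ∈ Icc a b, f x = (b - x) * g x)
    (hf : ∀ x ∈ Ioo a b, HasDerivAt f (f' x) x)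
    (hint : IntervalIntegrable (fun x ↦ f' x * Real.log ((b - a) / (b - x))) volume a b) :
    ∫ x in a..b, f' x * Real.log ((b - a) / (b - x)) = -∫ x in a..b, g x := by
  have hg_int : IntervalIntegrable g volume a b := hg.intervalIntegrable_of_Icc hab.le
  have hcont : ContinuousOn (fun x ↦ f x * Real.log ((b - a) / (b - x))) (Icc a b) := by
    have hlog : Continuous fun x ↦ (b - x) * Real.log ((b - a) / (b - x)) :=
      (continuous_mul_log_div (b - a)).comp (continuous_const.sub continuous_id)
    refine (hg.fun_mul hlog.continuousOn).congr fun x hx ↦ ?_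
    rw [hfg x hx]
    ring
  have hderiv : ∀ x ∈ Ioo a b, HasDerivAt (fun x ↦ f x * Real.log ((b - a) / (b - x)))
      (f' x * Real.log ((b - a) / (b - x)) + g x) x := by
    intro x hx
    have hx_ne : b - x ≠ 0 := sub_ne_zero.mpr hx.2.ne'
    refine ((hf x hx).mul (hasDerivAt_log_div_sub (sub_ne_zero.mpr hab.ne') hx_ne)).congr_deriv ?_
    rw [hfg x (Ioo_subset_Icc_self hx)]
    field_simp
  have hFTC := intervalIntegral.integral_eq_sub_of_hasDerivAt_of_le hab.le hcont hderiv
    (hint.add hg_int)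
  have hfb : f b = 0 := by simp [hfg b (right_mem_Icc.mpr hab.le)]
  rw [intervalIntegral.integral_add hint hg_int, hfb, Real.log_div_self, zero_mul, mul_zero,
    sub_zero] at hFTC
  exact eq_neg_of_add_eq_zero_left hFTC

theorem integral_derivative_mul_log_div_sub {a b : ℝ} (hab : a < b) {P Q : ℝ[X]}
    (hPQ : P = (C b - X) * Q) :
    ∫ x in a..b, (derivative P).eval x * Real.log ((b - a) / (b - x))
      = -∫ x in a..b, Q.eval x :=
  integral_deriv_mul_log_div_sub hab Q.continuousOn (fun x _ ↦ by simp [hPQ])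
    (fun x _ ↦ P.hasDerivAt x)
    ((intervalIntegrable_log_div_sub a b _ b).continuousOn_mul (derivative P).continuousOn)

section Antiderivative

variable (R : Type*) [CommRing R]

/-- The antiderivative of `2n(n+2) T_{n+1}` that vanishes at `1`. -/
noncomputable def antiderivT (n : ℤ) : R[X] :=
  (n : R[X]) * T R (n + 2) - ((n : R[X]) + 2) * T R n + 2

theorem derivative_antiderivT (n : ℤ) :
    derivative (antiderivT R n) = C (2 * ((n : R) * (n + 2))) * T R (n + 1) := by
  have hU := two_mul_T_eq_U_sub_U R (n - 1)
  rw [show n - 1 + 2 = n + 1 by ring] at hU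
  simp only [antiderivT, derivative_sub, derivative_mul, derivative_intCast, derivative_ofNat,
    T_derivative_eq_U, map_mul, map_add, map_intCast, map_ofNat]
  rw [show n + 2 - 1 = n + 1 by ring]
  push_cast
  linear_combination -((n : R[X]) * (n + 2)) * hU

theorem eval_one_antiderivT (n : ℤ) : (antiderivT R n).eval 1 = 0 := by
  simp only [antiderivT, eval_add, eval_sub, eval_mul, eval_intCast, eval_ofNat, T_eval_one]
  ring

theorem eval_neg_one_antiderivT (n : ℤ) :
    (antiderivT R n).eval (-1) = 2 * (1 - (n.negOnePow : R)) := by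
  simp only [antiderivT, eval_add, eval_sub, eval_mul, eval_intCast, eval_ofNat, T_eval_neg_one,
    Int.negOnePow_add, Int.negOnePow_even 2 even_two, mul_one]
  ring

/-- The quotient of `antiderivT R n` by `-2 (1 - X)`, as a combination of Chebyshev polynomials. -/
noncomputable def cofactorT (n : ℕ) : R[X] :=
  ∑ k ∈ Finset.range n, (((k : R[X]) + 1) * T R (k + 2) + ((k : R[X]) + 2) * T R (k + 1))

theorem antiderivT_eq_mul_cofactorT (n : ℕ) :
    antiderivT R n = (C 1 - X) * (C (-2) * cofactorT R n) := by
  simp only [antiderivT, cofactorT, map_one, map_neg, map_ofNat, Int.cast_natCast]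
  induction n with
  | zero => simp
  | succ n ih =>
    have hT₃ := T_add_two R (n + 1)
    have hT₂ := T_add_two R n
    rw [show (n : ℤ) + 1 + 1 = n + 2 by ring] at hT₃
    rw [Finset.sum_range_succ]
    push_cast
    linear_combination ih + ((n : R[X]) + 1) * hT₃ + ((n : R[X]) + 2) * hT₂

end Antiderivative

theorem mul_integral_T_add_one (n : ℤ) (a b : ℝ) :
    2 * (n * (n + 2)) * ∫ x in a..b, (T ℝ (n + 1)).eval x
      = (antiderivT ℝ n).eval b - (antiderivT ℝ n).eval a := by
  rw [← intervalIntegral.integral_eq_sub_of_hasDerivAt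
    (fun x _ ↦ (antiderivT ℝ n).hasDerivAt x)
    ((derivative (antiderivT ℝ n)).continuous.intervalIntegrable a b)]
  simp only [derivative_antiderivT, eval_C_mul, intervalIntegral.integral_const_mul]

theorem one_sub_sq_mul_integral_T (m : ℤ) :
    (1 - (m : ℝ) ^ 2) * ∫ x in (-1)..1, (T ℝ m).eval x = 1 + m.negOnePow := by
  have h := mul_integral_T_add_one (m - 1) (-1) 1
  rw [eval_one_antiderivT, eval_neg_one_antiderivT, sub_add_cancel, Int.negOnePow_sub] at h
  push_cast [Int.negOnePow_one] at h
  linear_combination -h / 2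

theorem integral_T_of_even {m : ℤ} (hm : Even m) :
    ∫ x in (-1)..1, (T ℝ m).eval x = 2 / (1 - (m : ℝ) ^ 2) := by
  have hm_sq : 1 - (m : ℝ) ^ 2 ≠ 0 := by
    have hm_ne : 1 ≠ m ^ 2 := fun h ↦ Int.not_even_one (h ▸ hm.pow_of_ne_zero two_ne_zero)
    exact sub_ne_zero.mpr (mod_cast hm_ne)
  rw [eq_div_iff hm_sq, mul_comm, one_sub_sq_mul_integral_T, Int.negOnePow_even m hm]
  norm_num

theorem integral_eq_zero_of_odd {E : Type*} [NormedAddCommGroup E] [NormedSpace ℝ E] {f : ℝ → E}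
    (hf : f.Odd) (a : ℝ) : ∫ x in -a..a, f x = 0 := by
  have h := intervalIntegral.integral_comp_neg (a := -a) (b := a) f
  simp only [hf.eq, intervalIntegral.integral_neg, neg_neg] at h
  have : IsAddTorsionFree E := .of_isTorsionFree ℝ E
  exact self_eq_neg.mp h.symm

theorem integral_T_of_odd {m : ℤ} (hm : Odd m) (a : ℝ) : ∫ x in -a..a, (T ℝ m).eval x = 0 :=
  integral_eq_zero_of_odd (fun x ↦ by simp [T_eval_neg, Int.negOnePow_odd m hm]) a

theorem integral_cofactorT (n : ℕ) (a b : ℝ) :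
    ∫ x in a..b, (cofactorT ℝ n).eval x
      = ∑ k ∈ Finset.range n, (((k : ℝ) + 1) * (∫ x in a..b, (T ℝ (k + 2)).eval x)
          + ((k : ℝ) + 2) * ∫ x in a..b, (T ℝ (k + 1)).eval x) := by
  have hint (c : ℝ) (m : ℤ) : IntervalIntegrable (fun x ↦ c * (T ℝ m).eval x) volume a b :=
    ((T ℝ m).continuous.intervalIntegrable a b).const_mul c
  simp only [cofactorT, eval_finsetSum, eval_add, eval_mul, eval_natCast, eval_ofNat, eval_one]
  rw [intervalIntegral.integral_finsetSum fun k _ ↦ (hint _ _).add (hint _ _)]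
  simp only [intervalIntegral.integral_add (hint _ _) (hint _ _),
    intervalIntegral.integral_const_mul]

theorem mul_integral_T_mul_log_eq_integral_cofactorT (n : ℕ) :
    (n : ℝ) * (n + 2) * ∫ x in (-1)..1, (T ℝ (n + 1)).eval x * Real.log (2 / (1 - x))
      = ∫ x in (-1)..1, (cofactorT ℝ n).eval x := by
  have hparts := integral_derivative_mul_log_div_sub (neg_lt_self one_pos)
    (antiderivT_eq_mul_cofactorT ℝ n)
  simp only [derivative_antiderivT, eval_C_mul, mul_assoc, intervalIntegral.integral_const_mul,
    sub_neg_eq_add, one_add_one_eq_two, Int.cast_natCast] at hparts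
  linarith

end ChebyshevLogMoments

/-- For the moments `μ_n = ∫_{-1}^1 T_n(x) log(2/(1-x)) dx`, the odd
moments satisfy `2n(2n+2) μ_{2n+1} = ∑_{k=0}^{n-1} 4(2k+2)/(1-(2k+2)²)`. -/
theorem logweight_odd_moments
    (μ : ℕ → ℝ)
    (hμ : ∀ n : ℕ, μ n = ∫ x in (-1 : ℝ)..1,
      (Polynomial.Chebyshev.T ℝ n).eval x * Real.log (2 / (1 - x))) :
    ∀ n : ℕ, (2 * (n : ℝ)) * (2 * (n : ℝ) + 2) * μ (2 * n + 1)
      = ∑ k ∈ Finset.range n, 4 * (2 * (k : ℝ) + 2) / (1 - (2 * (k : ℝ) + 2) ^ 2) := by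
  open ChebyshevLogMoments Polynomial.Chebyshev in
  intro n
  have hmoment := mul_integral_T_mul_log_eq_integral_cofactorT (2 * n)
  rw [integral_cofactorT, sum_range_two_mul] at hmoment
  rw [hμ]
  push_cast at hmoment ⊢
  rw [hmoment]
  refine Finset.sum_congr rfl fun k _ ↦ ?_
  have hodd₁ : ∫ x in (-1)..1, (T ℝ (2 * k + 1)).eval x = 0 :=
    integral_T_of_odd ⟨k, rfl⟩ 1
  have hodd₃ : ∫ x in (-1)..1, (T ℝ (2 * k + 1 + 2)).eval x = 0 :=
    integral_T_of_odd ⟨k + 1, by ring⟩ 1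
  have heven : ∫ x in (-1)..1, (T ℝ (2 * k + 2)).eval x = 2 / (1 - (2 * (k : ℝ) + 2) ^ 2) := by
    exact_mod_cast integral_T_of_even (m := 2 * k + 2) ⟨k + 1, by ring⟩
  rw [add_assoc (2 * (k : ℤ)) 1 1, one_add_one_eq_two, hodd₁, hodd₃, heven]
  ring
end

section
/- Let w : ℝ → ℝ be of bounded variation on [−1,1] and integrable on [−1,1], let M = sup_{x ∈ [−1,1]} |w(x)| and let V be the total variation of w on [−1,1]. Then for every n ≥ 2: |∫_{−1}^{1} T_n(x) w(x) dx| ≤ 2M/(n−1)² + V/(n−1). -/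
open Polynomial MeasureTheory

/-!
Integrate by parts against the primitive `T_{n+1} / (2(n+1)) - T_{n-1} / (2(n-1))` of `T_n`. It is
at most `n / (n² - 1)` in absolute value on `[-1, 1]`, and at `±1` the two terms nearly cancel,
leaving `1 / (n² - 1)`: the boundary terms contribute at most `2M / (n² - 1)` and the Stieltjes
integral against `w` at most `nV / (n² - 1)`.

Integration by parts against a function of bounded variation is needed only as an inequality, so
no Stieltjes integral has to be constructed. Let `F` be a primitive of `f`. Replacing `w` by `w a`
in `∫ x in a..b, f x • w x` costs at most `∫ ‖f‖` times the variation of `w` on `[a, b]` and leaves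
`(F b - F a) • w a`, which differs from `F b • w b - F a • w a` by at most `‖F b‖` times that
variation. Summing over partitions on whose pieces `∫ ‖f‖` is at most `ε` and letting `ε → 0`
removes the first error.
-/

section BoundedVariation

variable {α E : Type*} [LinearOrder α]

lemma countable_not_continuousWithinAt_of_locallyBoundedVariationOn [TopologicalSpace α]
    [OrderTopology α] [PseudoMetricSpace E] {w : α → E} {s : Set α}
    (hw : LocallyBoundedVariationOn w s) :
    {x ∈ s | ¬ ContinuousWithinAt w s x}.Countable := by
  obtain rfl | ⟨a, ha⟩ := s.eq_empty_or_nonempty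
  · simp
  have dist_le {x y : α} (hx : x ∈ s) (hy : y ∈ s) :
      dist (w y) (w x) ≤ dist (variationOnFromTo w s a y) (variationOnFromTo w s a x) := by
    wlog hxy : x ≤ y generalizing x y
    · simpa only [dist_comm] using this hy hx (le_of_not_ge hxy)
    calc dist (w y) (w x) ≤ (eVariationOn w (s ∩ Set.Icc x y)).toReal :=
          BoundedVariationOn.dist_le (hw x y hx hy) ⟨hy, hxy, le_rfl⟩ ⟨hx, le_rfl, hxy⟩
      _ = variationOnFromTo w s a y - variationOnFromTo w s a x := by
          rw [variationOnFromTo.sub_right hw ha hy hx, variationOnFromTo.eq_of_le w s hxy]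
      _ ≤ _ := le_abs_self _
  refine (variationOnFromTo.monotoneOn hw ha).countable_not_continuousWithinAt.mono ?_
  rintro x ⟨hx, hwx⟩
  refine ⟨hx, fun hv ↦ hwx ?_⟩
  rw [ContinuousWithinAt, tendsto_iff_dist_tendsto_zero] at hv ⊢
  refine squeeze_zero' (.of_forall fun _ ↦ dist_nonneg) ?_ hv
  filter_upwards [self_mem_nhdsWithin] with y hy using dist_le hx hy

lemma aestronglyMeasurable_of_locallyBoundedVariationOn [TopologicalSpace α] [OrderTopology α]
    [SecondCountableTopology α] [MeasurableSpace α] [OpensMeasurableSpace α] [PseudoMetricSpace E]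
    {μ : Measure α} [NullSingletonClass μ] {w : α → E} {s : Set α} (hs : MeasurableSet s)
    (hw : LocallyBoundedVariationOn w s) : AEStronglyMeasurable w (μ.restrict s) := by
  set D := {x ∈ s | ¬ ContinuousWithinAt w s x}
  have hD : D.Countable := countable_not_continuousWithinAt_of_locallyBoundedVariationOn hw
  have hcont : ContinuousOn w (s \ D) := fun x hx ↦
    (not_not.1 fun h ↦ hx.2 ⟨hx.1, h⟩ : ContinuousWithinAt w s x).mono Set.sdiff_subset
  rw [← Measure.restrict_congr_set (sdiff_null_ae_eq_self (hD.measure_zero μ))]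
  exact hcont.aestronglyMeasurable (hs.diff hD.measurableSet)

lemma norm_le_norm_add_toReal_eVariationOn [SeminormedAddCommGroup E] {w : α → E} {s : Set α}
    (hw : BoundedVariationOn w s) {x y : α} (hx : x ∈ s) (hy : y ∈ s) :
    ‖w x‖ ≤ ‖w y‖ + (eVariationOn w s).toReal :=
  (norm_le_norm_add_norm_sub' _ _).trans <|
    add_le_add_right (dist_eq_norm (w x) (w y) ▸ hw.dist_le hx hy) _

end BoundedVariation

section IntegrationByParts

variable {𝕜 E : Type*} [RCLike 𝕜] [NormedAddCommGroup E] [NormedSpace 𝕜 E]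
  {f F : ℝ → 𝕜} {w : ℝ → E} {a b K ε : ℝ}

lemma intervalIntegrable_smul_of_boundedVariationOn {μ : Measure ℝ} [NullSingletonClass μ]
    (hf : IntervalIntegrable f μ a b) (hw : BoundedVariationOn w (Set.uIcc a b)) :
    IntervalIntegrable (fun x ↦ f x • w x) μ a b := by
  have hsub : Set.uIoc a b ⊆ Set.uIcc a b := Set.uIoc_subset_uIcc
  rw [intervalIntegrable_iff] at hf ⊢
  refine hf.smul_bdd (‖w a‖ + (eVariationOn w (Set.uIcc a b)).toReal)
    (aestronglyMeasurable_of_locallyBoundedVariationOn measurableSet_uIoc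
      (hw.mono hsub).locallyBoundedVariationOn) ?_
  filter_upwards [ae_restrict_mem measurableSet_uIoc] with x hx
  exact norm_le_norm_add_toReal_eVariationOn hw (hsub hx) Set.left_mem_uIcc

variable [NormedSpace ℝ E] [CompleteSpace E]

lemma norm_integral_smul_sub_le_add_integral_norm_mul_eVariationOn (hab : a ≤ b)
    (hF : ∀ x ∈ Set.Icc a b, HasDerivAt F (f x) x) (hf : IntervalIntegrable f volume a b)
    (hw : BoundedVariationOn w (Set.Icc a b)) :
    ‖(∫ x in a..b, f x • w x) - (F b • w b - F a • w a)‖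
      ≤ (‖F b‖ + ∫ x in a..b, ‖f x‖) * (eVariationOn w (Set.Icc a b)).toReal := by
  set v := (eVariationOn w (Set.Icc a b)).toReal
  have hwa {x : ℝ} (hx : x ∈ Set.Icc a b) : ‖w x - w a‖ ≤ v :=
    dist_eq_norm (w x) (w a) ▸ hw.dist_le hx (Set.left_mem_Icc.2 hab)
  have hfw : IntervalIntegrable (fun x ↦ f x • w x) volume a b :=
    intervalIntegrable_smul_of_boundedVariationOn hf (by rwa [Set.uIcc_of_le hab])
  have hfwa : IntervalIntegrable (fun x ↦ f x • w a) volume a b :=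
    hf.smul_continuousOn continuousOn_const
  have hftc : ∫ x in a..b, f x = F b - F a :=
    intervalIntegral.integral_eq_sub_of_hasDerivAt (by rwa [Set.uIcc_of_le hab]) hf
  have hsplit : (∫ x in a..b, f x • w x) - (F b • w b - F a • w a)
      = (∫ x in a..b, f x • (w x - w a)) - F b • (w b - w a) := by
    simp_rw [smul_sub]
    rw [intervalIntegral.integral_sub hfw hfwa, intervalIntegral.integral_smul_const, hftc,
      sub_smul]
    abel
  have hint : ‖∫ x in a..b, f x • (w x - w a)‖ ≤ (∫ x in a..b, ‖f x‖) * v := by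
    rw [← intervalIntegral.integral_mul_const]
    refine intervalIntegral.norm_integral_le_of_norm_le hab (.of_forall fun x hx ↦ ?_)
      (hf.norm.mul_const v)
    rw [norm_smul]
    exact mul_le_mul_of_nonneg_left (hwa (Set.Ioc_subset_Icc_self hx)) (norm_nonneg _)
  have hend : ‖F b • (w b - w a)‖ ≤ ‖F b‖ * v := by
    rw [norm_smul]
    exact mul_le_mul_of_nonneg_left (hwa (Set.right_mem_Icc.2 hab)) (norm_nonneg _)
  rw [hsplit, add_mul, add_comm]
  exact (norm_sub_le _ _).trans (add_le_add hint hend)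

lemma norm_integral_smul_sub_le_of_partition {t : ℕ → ℝ} (ht : Monotone t) (n : ℕ)
    (hF : ∀ x ∈ Set.Icc (t 0) (t n), HasDerivAt F (f x) x)
    (hf : IntervalIntegrable f volume (t 0) (t n))
    (hw : BoundedVariationOn w (Set.Icc (t 0) (t n)))
    (hK : ∀ x ∈ Set.Icc (t 0) (t n), ‖F x‖ ≤ K)
    (hε : ∀ i < n, ∫ x in t i..t (i + 1), ‖f x‖ ≤ ε) :
    ‖(∫ x in t 0..t n, f x • w x) - (F (t n) • w (t n) - F (t 0) • w (t 0))‖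
      ≤ (K + ε) * (eVariationOn w (Set.Icc (t 0) (t n))).toReal := by
  have hle (i : ℕ) : t i ≤ t (i + 1) := ht i.le_succ
  have hsub {i : ℕ} (hi : i < n) : Set.Icc (t i) (t (i + 1)) ⊆ Set.Icc (t 0) (t n) :=
    Set.Icc_subset_Icc (ht i.zero_le) (ht hi)
  have hwi {i : ℕ} (hi : i < n) : BoundedVariationOn w (Set.Icc (t i) (t (i + 1))) :=
    hw.mono (hsub hi)
  have hfi {i : ℕ} (hi : i < n) : IntervalIntegrable f volume (t i) (t (i + 1)) :=
    hf.mono_set <| by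
      simpa only [Set.uIcc_of_le (hle i), Set.uIcc_of_le (ht n.zero_le)] using hsub hi
  have hint : ∑ i ∈ Finset.range n, ∫ x in t i..t (i + 1), f x • w x
      = ∫ x in t 0..t n, f x • w x :=
    intervalIntegral.sum_integral_adjacent_intervals fun i hi ↦
      intervalIntegrable_smul_of_boundedVariationOn (hfi hi)
        (by simpa only [Set.uIcc_of_le (hle i)] using hwi hi)
  have hvar : ∑ i ∈ Finset.range n, (eVariationOn w (Set.Icc (t i) (t (i + 1)))).toReal
      = (eVariationOn w (Set.Icc (t 0) (t n))).toReal := by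
    rw [← ENNReal.toReal_sum fun i hi ↦ hwi (Finset.mem_range.1 hi), eVariationOn.sum' w ht]
  rw [← hint, ← Finset.sum_range_sub (fun i ↦ F (t i) • w (t i)), ← hvar,
    ← Finset.sum_sub_distrib, Finset.mul_sum]
  refine norm_sum_le_of_le _ fun i hi ↦ ?_
  rw [Finset.mem_range] at hi
  refine (norm_integral_smul_sub_le_add_integral_norm_mul_eVariationOn (hle i)
    (fun x hx ↦ hF x (hsub hi hx)) (hfi hi) (hwi hi)).trans ?_
  gcongr
  · exact hK _ (hsub hi (Set.right_mem_Icc.2 (hle i)))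
  · exact hε i hi

lemma exists_monotone_partition_dist_lt {X : Type*} [PseudoMetricSpace X] {g : ℝ → X}
    (hab : a ≤ b) (hg : ContinuousOn g (Set.Icc a b)) (hε : 0 < ε) :
    ∃ (t : ℕ → ℝ) (n : ℕ), Monotone t ∧ t 0 = a ∧ t n = b ∧
      ∀ i, dist (g (t (i + 1))) (g (t i)) < ε := by
  let c : X → Set (Set.Icc a b) := fun y ↦ {x | dist (g x) y < ε / 2}
  have hc_open (y : X) : IsOpen (c y) :=
    isOpen_lt (hg.domRestrict.dist continuous_const) continuous_const
  have hc_cover : Set.univ ⊆ ⋃ y, c y := fun x _ ↦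
    Set.mem_iUnion.2 ⟨g x, by simpa [c] using hε⟩
  obtain ⟨t, ht0, ht, ⟨n, hn⟩, htc⟩ :=
    exists_monotone_Icc_subset_open_cover_Icc hab hc_open hc_cover
  refine ⟨fun i ↦ t i, n, fun _ _ hij ↦ ht hij, ht0, hn n le_rfl, fun i ↦ ?_⟩
  obtain ⟨y, hy⟩ := htc i
  have hle : t i ≤ t (i + 1) := ht i.le_succ
  calc dist (g (t (i + 1))) (g (t i)) ≤ dist (g (t (i + 1))) y + dist (g (t i)) y :=
        dist_triangle_right _ _ _
    _ < ε / 2 + ε / 2 := add_lt_add (hy (Set.right_mem_Icc.2 hle)) (hy (Set.left_mem_Icc.2 hle))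
    _ = ε := add_halves ε

lemma exists_monotone_partition_integral_le {g : ℝ → ℝ} (hab : a ≤ b)
    (hg : IntervalIntegrable g volume a b) (hε : 0 < ε) :
    ∃ (t : ℕ → ℝ) (n : ℕ), Monotone t ∧ t 0 = a ∧ t n = b ∧
      ∀ i < n, ∫ x in t i..t (i + 1), g x ≤ ε := by
  have hcont : ContinuousOn (fun y ↦ ∫ x in a..y, g x) (Set.Icc a b) := by
    simpa only [Set.uIcc_of_le hab] using
      intervalIntegral.continuousOn_primitive_interval' hg Set.left_mem_uIcc
  obtain ⟨t, n, ht, rfl, rfl, hdist⟩ := exists_monotone_partition_dist_lt hab hcont hε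
  refine ⟨t, n, ht, rfl, rfl, fun i hi ↦ ?_⟩
  have hint {j : ℕ} (hj : j ≤ n) : IntervalIntegrable g volume (t 0) (t j) :=
    hg.mono_set (Set.uIcc_subset_uIcc_left
      (by rw [Set.uIcc_of_le hab]; exact ⟨ht j.zero_le, ht hj⟩))
  rw [← intervalIntegral.integral_interval_sub_left (hint hi) (hint hi.le)]
  exact (le_abs_self _).trans (hdist i).le

theorem norm_integral_smul_sub_le_mul_eVariationOn (hab : a ≤ b)
    (hF : ∀ x ∈ Set.Icc a b, HasDerivAt F (f x) x) (hf : IntervalIntegrable f volume a b)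
    (hw : BoundedVariationOn w (Set.Icc a b)) (hK : ∀ x ∈ Set.Icc a b, ‖F x‖ ≤ K) :
    ‖(∫ x in a..b, f x • w x) - (F b • w b - F a • w a)‖
      ≤ K * (eVariationOn w (Set.Icc a b)).toReal := by
  set v := (eVariationOn w (Set.Icc a b)).toReal
  have approx {ε : ℝ} (hε : 0 < ε) :
      ‖(∫ x in a..b, f x • w x) - (F b • w b - F a • w a)‖ ≤ (K + ε) * v := by
    obtain ⟨t, n, ht, rfl, rfl, hti⟩ := exists_monotone_partition_integral_le hab hf.norm hε
    exact norm_integral_smul_sub_le_of_partition ht n hF hf hw hK hti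
  have hlim : Filter.Tendsto (fun ε ↦ (K + ε) * v) (nhdsWithin 0 (Set.Ioi 0)) (nhds (K * v)) :=
    tendsto_nhdsWithin_of_tendsto_nhds <| Continuous.tendsto' (by fun_prop) _ _ (by simp)
  refine ge_of_tendsto hlim ?_
  filter_upwards [self_mem_nhdsWithin] with ε hε using approx hε

end IntegrationByParts

section ChebyshevPrimitive

/-- The primitive `T_{n+1} / (2(n+1)) - T_{n-1} / (2(n-1))` of the Chebyshev polynomial `T_n`, for
integer `n`. It is meaningful only if neither denominator vanishes in `R`, since division by zero
gives zero. -/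
noncomputable def chebyshevTPrimitive (R : Type*) [Field R] (n : ℤ) : R[X] :=
  C (1 / (2 * ((n : R) + 1))) * Chebyshev.T R (n + 1)
    - C (1 / (2 * ((n : R) - 1))) * Chebyshev.T R (n - 1)

section Field

variable {R : Type*} [Field R] {n : ℤ}

lemma derivative_chebyshevTPrimitive [NeZero (2 : R)] (hn : (n : R) + 1 ≠ 0)
    (hn' : (n : R) - 1 ≠ 0) : derivative (chebyshevTPrimitive R n) = Chebyshev.T R n := by
  have hterm {m : ℤ} (hm : (m : R) ≠ 0) :
      derivative (C (1 / (2 * (m : R))) * Chebyshev.T R m) = C (1 / 2) * Chebyshev.U R (m - 1) := by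
    rw [derivative_C_mul, Chebyshev.T_derivative_eq_U, ← C_eq_intCast, ← mul_assoc, ← C_mul]
    congr 2
    field_simp
  have hU : Chebyshev.U R n - Chebyshev.U R (n - 2) = C 2 * Chebyshev.T R n := by
    simpa only [sub_add_cancel, C_ofNat] using (Chebyshev.two_mul_T_eq_U_sub_U R (n - 2)).symm
  have hadd := hterm (m := n + 1) (by exact_mod_cast hn)
  have hsub := hterm (m := n - 1) (by exact_mod_cast hn')
  push_cast at hadd hsub
  rw [chebyshevTPrimitive, derivative_sub, hadd, hsub, ← mul_sub, add_sub_cancel_right, sub_sub,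
    one_add_one_eq_two, hU, ← mul_assoc, ← C_mul, one_div_mul_cancel two_ne_zero, C_1, one_mul]

lemma eval_one_chebyshevTPrimitive [NeZero (2 : R)] (hn : (n : R) + 1 ≠ 0)
    (hn' : (n : R) - 1 ≠ 0) :
    (chebyshevTPrimitive R n).eval 1 = -1 / ((n : R) ^ 2 - 1) := by
  rw [← one_pow 2, sq_sub_sq]
  simp only [chebyshevTPrimitive, eval_sub, eval_mul, eval_C, Chebyshev.T_eval_one, one_pow]
  field_simp
  ring

lemma eval_neg_chebyshevTPrimitive (n : ℤ) (x : R) :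
    (chebyshevTPrimitive R n).eval (-x)
      = -(n.negOnePow : R) * (chebyshevTPrimitive R n).eval x := by
  simp only [chebyshevTPrimitive, eval_sub, eval_mul, eval_C, Chebyshev.T_eval_neg,
    Int.negOnePow_add, Int.negOnePow_sub, Int.negOnePow_one]
  push_cast
  ring

end Field

variable {n : ℤ}

lemma abs_eval_one_chebyshevTPrimitive (hn : 1 < n) :
    |(chebyshevTPrimitive ℝ n).eval 1| = 1 / ((n : ℝ) ^ 2 - 1) := by
  have hn1 : (1 : ℝ) < n := by exact_mod_cast hn
  rw [eval_one_chebyshevTPrimitive (by linarith) (by linarith), abs_div, abs_neg, abs_one,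
    abs_of_pos (by nlinarith)]

lemma abs_eval_neg_one_chebyshevTPrimitive (hn : 1 < n) :
    |(chebyshevTPrimitive ℝ n).eval (-1)| = 1 / ((n : ℝ) ^ 2 - 1) := by
  rw [eval_neg_chebyshevTPrimitive, abs_mul, abs_neg, Int.cast_negOnePow, abs_neg_one_zpow,
    one_mul, abs_eval_one_chebyshevTPrimitive hn]

lemma abs_eval_chebyshevTPrimitive_le (hn : 1 < n) {x : ℝ} (hx : |x| ≤ 1) :
    |(chebyshevTPrimitive ℝ n).eval x| ≤ n / ((n : ℝ) ^ 2 - 1) := by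
  have hn1 : (1 : ℝ) < n := by exact_mod_cast hn
  have hadd : 0 < (n : ℝ) + 1 := by linarith
  have hsub : 0 < (n : ℝ) - 1 := by linarith
  have hterm (m : ℤ) {c : ℝ} (hc : 0 < c) :
      |1 / (2 * c) * (Chebyshev.T ℝ m).eval x| ≤ 1 / (2 * c) := by
    rw [abs_mul, abs_of_pos (by positivity)]
    exact mul_le_of_le_one_right (by positivity) (Chebyshev.abs_eval_T_real_le_one m hx)
  rw [chebyshevTPrimitive, eval_sub, eval_mul, eval_C, eval_mul, eval_C]
  calc _ ≤ 1 / (2 * ((n : ℝ) + 1)) + 1 / (2 * ((n : ℝ) - 1)) :=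
        (abs_sub _ _).trans (add_le_add (hterm _ hadd) (hterm _ hsub))
    _ = n / ((n : ℝ) ^ 2 - 1) := by
        rw [show (n : ℝ) ^ 2 - 1 = (n + 1) * (n - 1) by ring]
        field_simp
        ring

end ChebyshevPrimitive

section MomentBound

variable {E : Type*} [NormedAddCommGroup E] [NormedSpace ℝ E] [CompleteSpace E] {w : ℝ → E}

theorem norm_integral_chebyshevT_smul_le {n : ℤ} (hn : 1 < n)
    (hw : BoundedVariationOn w (Set.Icc (-1 : ℝ) 1)) :
    ‖∫ x in (-1 : ℝ)..1, (Chebyshev.T ℝ n).eval x • w x‖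
      ≤ (‖w 1‖ + ‖w (-1)‖ + n * (eVariationOn w (Set.Icc (-1 : ℝ) 1)).toReal)
        / ((n : ℝ) ^ 2 - 1) := by
  have hn1 : (1 : ℝ) < n := by exact_mod_cast hn
  set F := chebyshevTPrimitive ℝ n
  have hF : derivative F = Chebyshev.T ℝ n :=
    derivative_chebyshevTPrimitive (by linarith) (by linarith)
  set J := ∫ x in (-1 : ℝ)..1, (Chebyshev.T ℝ n).eval x • w x
  set B := F.eval 1 • w 1 - F.eval (-1) • w (-1)
  set V := (eVariationOn w (Set.Icc (-1 : ℝ) 1)).toReal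
  have hparts : ‖J - B‖ ≤ n / ((n : ℝ) ^ 2 - 1) * V :=
    norm_integral_smul_sub_le_mul_eVariationOn (by norm_num)
      (fun x _ ↦ hF ▸ F.hasDerivAt x) ((Polynomial.continuous _).intervalIntegrable _ _) hw
      (fun x hx ↦ abs_eval_chebyshevTPrimitive_le hn (abs_le.2 hx))
  have hboundary : ‖B‖ ≤ 1 / ((n : ℝ) ^ 2 - 1) * (‖w 1‖ + ‖w (-1)‖) := by
    refine (norm_sub_le _ _).trans_eq ?_
    rw [norm_smul, norm_smul, Real.norm_eq_abs, Real.norm_eq_abs,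
      abs_eval_one_chebyshevTPrimitive hn, abs_eval_neg_one_chebyshevTPrimitive hn, mul_add]
  calc ‖J‖ ≤ ‖B‖ + ‖J - B‖ := norm_le_norm_add_norm_sub' _ _
    _ ≤ 1 / ((n : ℝ) ^ 2 - 1) * (‖w 1‖ + ‖w (-1)‖) + n / ((n : ℝ) ^ 2 - 1) * V :=
        add_le_add hboundary hparts
    _ = (‖w 1‖ + ‖w (-1)‖ + n * V) / ((n : ℝ) ^ 2 - 1) := by ring

theorem chebyshev_moment_bound_BV_general (hw : BoundedVariationOn w (Set.Icc (-1 : ℝ) 1))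
    (M V : ℝ) (hM : M = sSup ((fun x ↦ ‖w x‖) '' Set.Icc (-1 : ℝ) 1))
    (hV : V = (eVariationOn w (Set.Icc (-1 : ℝ) 1)).toReal) (n : ℕ) (hn : 2 ≤ n) :
    ‖∫ x in (-1 : ℝ)..1, (Chebyshev.T ℝ n).eval x • w x‖
      ≤ 2 * M / ((n : ℝ) - 1) ^ 2 + V / ((n : ℝ) - 1) := by
  have hn2 : (2 : ℝ) ≤ n := by exact_mod_cast hn
  have hsub : 0 < (n : ℝ) - 1 := by linarith
  have h1 : (1 : ℝ) ∈ Set.Icc (-1 : ℝ) 1 := by simp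
  have hbdd : BddAbove ((fun x ↦ ‖w x‖) '' Set.Icc (-1 : ℝ) 1) :=
    ⟨_, Set.forall_mem_image.2 fun x hx ↦ norm_le_norm_add_toReal_eVariationOn hw hx h1⟩
  have hwM {x : ℝ} (hx : x ∈ Set.Icc (-1 : ℝ) 1) : ‖w x‖ ≤ M :=
    hM ▸ le_csSup hbdd (Set.mem_image_of_mem _ hx)
  have hM0 : 0 ≤ M := (norm_nonneg _).trans (hwM h1)
  have hV0 : 0 ≤ V := hV ▸ ENNReal.toReal_nonneg
  calc _ ≤ (‖w 1‖ + ‖w (-1)‖ + n * V) / ((n : ℝ) ^ 2 - 1) := by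
        simpa only [Int.cast_natCast, ← hV] using
          norm_integral_chebyshevT_smul_le (n := n) (by exact_mod_cast hn) hw
    _ ≤ (2 * M + (n + 1) * V) / (((n : ℝ) + 1) * (n - 1)) := by
        rw [show (n : ℝ) ^ 2 - 1 = (n + 1) * (n - 1) by ring]
        gcongr
        · linarith [hwM h1, hwM (x := -1) (by simp)]
        · linarith
    _ = 2 * M / (((n : ℝ) + 1) * (n - 1)) + V / (n - 1) := by field_simp
    _ ≤ 2 * M / ((n : ℝ) - 1) ^ 2 + V / ((n : ℝ) - 1) := by
        rw [sq]
        gcongr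
        linarith

end MomentBound

/-- If `w` is of bounded variation and integrable on `[-1,1]`, with
`M = sup_{[-1,1]} |w|` and `V` the total variation of `w` on `[-1,1]`, then for
`n ≥ 2`, `|∫ T_n w| ≤ 2M/(n-1)² + V/(n-1)`. -/
theorem chebyshev_moment_bound_BV
    (w : ℝ → ℝ)
    (hBV : BoundedVariationOn w (Set.Icc (-1 : ℝ) 1))
    (hInt : IntervalIntegrable w MeasureTheory.volume (-1) 1)
    (M V : ℝ)
    (hM : M = sSup ((fun x => |w x|) '' Set.Icc (-1 : ℝ) 1))
    (hV : V = (eVariationOn w (Set.Icc (-1 : ℝ) 1)).toReal)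
    (n : ℕ) (hn : 2 ≤ n) :
    |∫ x in (-1 : ℝ)..1, (Polynomial.Chebyshev.T ℝ n).eval x * w x|
      ≤ 2 * M / ((n : ℝ) - 1) ^ 2 + V / ((n : ℝ) - 1) := by
  simpa only [Real.norm_eq_abs, smul_eq_mul] using
    chebyshev_moment_bound_BV_general hBV M V hM hV n hn
end

section
/- Let w : ℝ → ℝ be differentiable on an open set containing [−1,1] with derivative w′, and suppose w′ is of bounded variation on [−1,1]. Let M = sup_{x ∈ [−1,1]} |w(x)|, M′ = sup_{x ∈ [−1,1]} |w′(x)|, and let V′ be the total variation of w′ on [−1,1]. Then for every n ≥ 3: |∫_{−1}^{1} T_n(x) w(x) dx| ≤ 2M/(n−1)² + 2M′/(n−2)³ + V′/(n−2)². -/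
open Polynomial MeasureTheory

/-!
Since `2 T_k = T_{k+1}' / (k + 1) - T_{k-1}' / (k - 1)`, the Chebyshev polynomials have
antiderivatives that are again combinations of Chebyshev polynomials, each integration gaining a
factor of order `1 / k`. Integrate `∫ T_n w` by parts twice. The second time `w'` is not
differentiated: its variation takes the place of `∫ |w''|`. At `±1`, where `T_{k+1} = T_{k-1}`, the
two terms of each antiderivative nearly cancel, so that the boundary terms are smaller than the
bounds on the antiderivatives over `[-1, 1]`.
-/

section BoundedVariation

open Set

variable {f f' g : ℝ → ℝ} {a b δ K L : ℝ}

theorem isBounded_image_of_boundedVariationOn {α E : Type*} [LinearOrder α] [PseudoMetricSpace E]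
    {h : α → E} {s : Set α} (hh : BoundedVariationOn h s) : Bornology.IsBounded (h '' s) :=
  Metric.isBounded_iff.2 ⟨_, forall_mem_image.2 fun _ hx ↦ forall_mem_image.2 fun _ hy ↦
    hh.dist_le hx hy⟩

theorem intervalIntegrable_of_boundedVariationOn (hg : BoundedVariationOn g (uIcc a b)) :
    IntervalIntegrable g volume a b := by
  obtain ⟨p, q, hp, hq, rfl⟩ := hg.locallyBoundedVariationOn.exists_monotoneOn_sub_monotoneOn
  exact hp.intervalIntegrable.sub hq.intervalIntegrable

theorem sum_toReal_eVariationOn_Icc {E : Type*} [PseudoEMetricSpace E] {h : ℝ → E} {u : ℕ → ℝ}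
    (hu : Monotone u) {N : ℕ} (hh : BoundedVariationOn h (Icc (u 0) (u N))) :
    ∑ i ∈ Finset.range N, (eVariationOn h (Icc (u i) (u (i + 1)))).toReal
      = (eVariationOn h (Icc (u 0) (u N))).toReal := by
  rw [← eVariationOn.sum' h hu, ENNReal.toReal_sum]
  intro i hi
  exact hh.mono (Icc_subset_Icc (hu i.zero_le) (hu (Finset.mem_range.1 hi)))

theorem abs_integral_deriv_mul_sub_le_of_abs_deriv_le (hab : a ≤ b)
    (hf : ∀ x ∈ Icc a b, HasDerivAt f (f' x) x) (hf' : ContinuousOn f' (Icc a b))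
    (hg : BoundedVariationOn g (Icc a b)) (hK : |f b| ≤ K) (hL : ∀ x ∈ Icc a b, |f' x| ≤ L) :
    |(∫ x in a..b, f' x * g x) - (f b * g b - f a * g a)|
      ≤ (K + L * (b - a)) * (eVariationOn g (Icc a b)).toReal := by
  set V := (eVariationOn g (Icc a b)).toReal
  have increment_le : ∀ x ∈ Icc a b, |g x - g a| ≤ V := fun x hx ↦
    hg.dist_le hx (left_mem_Icc.2 hab)
  have hL0 : 0 ≤ L := (abs_nonneg _).trans (hL a (left_mem_Icc.2 hab))
  rw [← uIcc_of_le hab] at hf hf' hg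
  have integral_centered : ∫ x in a..b, f' x * (g x - g a)
      = (∫ x in a..b, f' x * g x) - (f b - f a) * g a := by
    simp only [mul_sub]
    rw [intervalIntegral.integral_sub
        ((intervalIntegrable_of_boundedVariationOn hg).continuousOn_mul hf')
        (hf'.intervalIntegrable.mul_const _),
      intervalIntegral.integral_mul_const,
      intervalIntegral.integral_eq_sub_of_hasDerivAt hf hf'.intervalIntegrable]
  have integral_centered_le : |∫ x in a..b, f' x * (g x - g a)| ≤ L * V * (b - a) := by
    rw [← abs_of_nonneg (sub_nonneg.2 hab), ← Real.norm_eq_abs]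
    refine intervalIntegral.norm_integral_le_of_norm_le_const fun x hx ↦ ?_
    rw [uIoc_of_le hab] at hx
    have hx' := Ioc_subset_Icc_self hx
    rw [Real.norm_eq_abs, abs_mul]
    exact mul_le_mul (hL x hx') (increment_le x hx') (abs_nonneg _) hL0
  have boundary_le : |f b * (g b - g a)| ≤ K * V := by
    rw [abs_mul]
    exact mul_le_mul hK (increment_le b (right_mem_Icc.2 hab)) (abs_nonneg _)
      ((abs_nonneg _).trans hK)
  calc |(∫ x in a..b, f' x * g x) - (f b * g b - f a * g a)|
      = |(∫ x in a..b, f' x * (g x - g a)) - f b * (g b - g a)| := by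
        rw [integral_centered]; ring_nf
    _ ≤ L * V * (b - a) + K * V :=
        (abs_sub _ _).trans (add_le_add integral_centered_le boundary_le)
    _ = (K + L * (b - a)) * V := by ring

theorem abs_integral_deriv_mul_sub_le_of_partition {u : ℕ → ℝ} (hu : Monotone u) {N : ℕ}
    (hδ : ∀ i, u (i + 1) - u i ≤ δ)
    (hf : ∀ x ∈ Icc (u 0) (u N), HasDerivAt f (f' x) x) (hf' : ContinuousOn f' (Icc (u 0) (u N)))
    (hg : BoundedVariationOn g (Icc (u 0) (u N))) (hK : ∀ x ∈ Icc (u 0) (u N), |f x| ≤ K)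
    (hL : ∀ x ∈ Icc (u 0) (u N), |f' x| ≤ L) :
    |(∫ x in u 0..u N, f' x * g x) - (f (u N) * g (u N) - f (u 0) * g (u 0))|
      ≤ (K + L * δ) * (eVariationOn g (Icc (u 0) (u N))).toReal := by
  have hL0 : 0 ≤ L := (abs_nonneg _).trans (hL _ (left_mem_Icc.2 (hu N.zero_le)))
  have hsub : ∀ i < N, Icc (u i) (u (i + 1)) ⊆ Icc (u 0) (u N) := fun i hi ↦
    Icc_subset_Icc (hu i.zero_le) (hu hi)
  have piece_integrable : ∀ i < N,
      IntervalIntegrable (fun x ↦ f' x * g x) volume (u i) (u (i + 1)) := by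
    intro i hi
    have hsub' := hsub i hi
    rw [← uIcc_of_le (hu i.le_succ)] at hsub'
    exact (intervalIntegrable_of_boundedVariationOn (hg.mono hsub')).continuousOn_mul
      (hf'.mono hsub')
  calc |(∫ x in u 0..u N, f' x * g x) - (f (u N) * g (u N) - f (u 0) * g (u 0))|
      = |∑ i ∈ Finset.range N, ((∫ x in u i..u (i + 1), f' x * g x)
          - (f (u (i + 1)) * g (u (i + 1)) - f (u i) * g (u i)))| := by
        rw [Finset.sum_sub_distrib, Finset.sum_range_sub (fun i ↦ f (u i) * g (u i)),
          intervalIntegral.sum_integral_adjacent_intervals piece_integrable]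
    _ ≤ ∑ i ∈ Finset.range N, |(∫ x in u i..u (i + 1), f' x * g x)
          - (f (u (i + 1)) * g (u (i + 1)) - f (u i) * g (u i))| :=
        Finset.abs_sum_le_sum_abs _ _
    _ ≤ ∑ i ∈ Finset.range N,
          (K + L * δ) * (eVariationOn g (Icc (u i) (u (i + 1)))).toReal := by
        refine Finset.sum_le_sum fun i hi ↦ ?_
        have hiN := Finset.mem_range.1 hi
        refine (abs_integral_deriv_mul_sub_le_of_abs_deriv_le (hu i.le_succ)
          (fun x hx ↦ hf x (hsub i hiN hx)) (hf'.mono (hsub i hiN)) (hg.mono (hsub i hiN))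
          (hK _ (hsub i hiN (right_mem_Icc.2 (hu i.le_succ))))
          fun x hx ↦ hL x (hsub i hiN hx)).trans ?_
        gcongr
        exact hδ i
    _ = (K + L * δ) * (eVariationOn g (Icc (u 0) (u N))).toReal := by
        rw [← Finset.mul_sum, sum_toReal_eVariationOn_Icc hu hg]

theorem abs_integral_deriv_mul_sub_le (hab : a ≤ b)
    (hf : ∀ x ∈ Icc a b, HasDerivAt f (f' x) x) (hf' : ContinuousOn f' (Icc a b))
    (hg : BoundedVariationOn g (Icc a b)) (hK : ∀ x ∈ Icc a b, |f x| ≤ K) :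
    |(∫ x in a..b, f' x * g x) - (f b * g b - f a * g a)|
      ≤ K * (eVariationOn g (Icc a b)).toReal := by
  obtain ⟨L, hL⟩ := isCompact_Icc.exists_bound_of_continuousOn hf'
  have uniform_partition_bound (N : ℕ) :
      |(∫ x in a..b, f' x * g x) - (f b * g b - f a * g a)|
        ≤ (K + L * ((b - a) * (1 / (N + 1)))) * (eVariationOn g (Icc a b)).toReal := by
    set δ := (b - a) * (1 / ((N : ℝ) + 1)) with hδ
    have hδ0 : 0 ≤ δ := mul_nonneg (sub_nonneg.2 hab) (by positivity)
    have hu : Monotone fun i : ℕ ↦ a + i * δ := fun i j hij ↦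
      add_le_add_right (mul_le_mul_of_nonneg_right (Nat.cast_le.2 hij) hδ0) a
    have hu0 : a + ((0 : ℕ) : ℝ) * δ = a := by simp
    have huN : a + ((N + 1 : ℕ) : ℝ) * δ = b := by rw [hδ]; push_cast; field_simp; ring
    have partition_bound := abs_integral_deriv_mul_sub_le_of_partition (f := f) (f' := f') (g := g)
      (K := K) (L := L) (δ := δ) hu (N := N + 1) fun i ↦ le_of_eq (by push_cast; ring)
    simp only [hu0, huN] at partition_bound
    exact partition_bound hf hf' hg hK hL
  have hlim := (((tendsto_one_div_add_atTop_nhds_zero_nat (𝕜 := ℝ).const_mul (b - a)).const_mul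
    L).const_add K).mul_const (eVariationOn g (Icc a b)).toReal
  simp only [mul_zero, add_zero] at hlim
  exact ge_of_tendsto' hlim uniform_partition_bound

end BoundedVariation

/-- An `m`-fold antiderivative of the Chebyshev polynomial `T_k`, obtained by iterating
`∫ T_k = T_{k+1} / (2 (k + 1)) - T_{k-1} / (2 (k - 1))`. If `|k| ≤ m`, a denominator may
vanish; then `0⁻¹ = 0` drops the corresponding term and the result need not be an antiderivative. -/
noncomputable def chebyshevPrimitive : ℕ → ℤ → ℝ[X]
  | 0, k => Chebyshev.T ℝ k
  | m + 1, k => (2 * ((k : ℝ) + 1))⁻¹ • chebyshevPrimitive m (k + 1)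
      - (2 * ((k : ℝ) - 1))⁻¹ • chebyshevPrimitive m (k - 1)

namespace chebyshevPrimitive

variable {m : ℕ} {k : ℤ} {x : ℝ}

theorem derivative_first (hk : 1 < k) :
    derivative (chebyshevPrimitive 1 k) = Chebyshev.T ℝ k := by
  have hk' : (1 : ℝ) < k := mod_cast hk
  have h_add : (k : ℝ) + 1 ≠ 0 := by linarith
  have h_sub : (k : ℝ) - 1 ≠ 0 := by linarith
  have two_mul_T : 2 * Chebyshev.T ℝ k = Chebyshev.U ℝ k - Chebyshev.U ℝ (k - 2) := by
    simpa only [sub_add_cancel] using Chebyshev.two_mul_T_eq_U_sub_U ℝ (k - 2)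
  refine Polynomial.funext fun x ↦ ?_
  have two_mul_T_eval := congrArg (eval x) two_mul_T
  simp only [chebyshevPrimitive, derivative_sub, derivative_smul, Chebyshev.T_derivative_eq_U,
    add_sub_cancel_right, sub_sub, one_add_one_eq_two, eval_sub, eval_smul, eval_mul, eval_intCast,
    eval_ofNat, smul_eq_mul] at two_mul_T_eval ⊢
  push_cast
  field_simp
  linarith

theorem derivative_succ (hk : m + 1 < k) :
    derivative (chebyshevPrimitive (m + 1) k) = chebyshevPrimitive m k := by
  induction m generalizing k with
  | zero => exact derivative_first (by simpa using hk)
  | succ m ih =>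
    push_cast at hk
    rw [chebyshevPrimitive, derivative_sub, derivative_smul, derivative_smul, ih (by lia),
      ih (by lia), chebyshevPrimitive]

theorem hasDerivAt_succ (hk : m + 1 < k) (x : ℝ) :
    HasDerivAt (fun y ↦ (chebyshevPrimitive (m + 1) k).eval y)
      ((chebyshevPrimitive m k).eval x) x :=
  derivative_succ hk ▸ (chebyshevPrimitive (m + 1) k).hasDerivAt x

theorem abs_eval_le (hk : m < k) (hx : |x| ≤ 1) :
    |(chebyshevPrimitive m k).eval x| ≤ 1 / ((k : ℝ) - m) ^ m := by
  induction m generalizing k with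
  | zero => simpa [chebyshevPrimitive] using Chebyshev.abs_eval_T_real_le_one k hx
  | succ m ih =>
    have hk' : (m : ℝ) + 1 < k := mod_cast hk
    have upper := ih (k := k + 1) (by lia)
    have lower := ih (k := k - 1) (by lia)
    push_cast at hk upper lower ⊢
    set d := (k : ℝ) - (m + 1) with hd
    have hd0 : 0 < d := by linarith
    have half_bound {c t y : ℝ} (hc : d ≤ c) (ht : d ≤ t) (hy : |y| ≤ 1 / t ^ m) :
        |(2 * c)⁻¹ * y| ≤ (2 * d)⁻¹ * (1 / d ^ m) := by
      rw [abs_mul, abs_of_pos (inv_pos.2 (by linarith))]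
      gcongr
      exact hy.trans (by gcongr)
    rw [chebyshevPrimitive, eval_sub, eval_smul, eval_smul, smul_eq_mul, smul_eq_mul]
    calc _ ≤ (2 * d)⁻¹ * (1 / d ^ m) + (2 * d)⁻¹ * (1 / d ^ m) :=
          (abs_sub _ _).trans (add_le_add (half_bound (by linarith [hd]) (by linarith [hd]) upper)
            (half_bound (by linarith [hd]) (by linarith [hd]) lower))
      _ = 1 / d ^ (m + 1) := by field_simp; ring

end chebyshevPrimitive

section Endpoints

variable {k : ℤ} {x : ℝ}

theorem eval_T_add_one_of_abs_eq_one (hx : |x| = 1) (k : ℤ) :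
    (Chebyshev.T ℝ (k + 1)).eval x = x * (Chebyshev.T ℝ k).eval x := by
  rcases eq_or_eq_neg_of_abs_eq hx with rfl | rfl <;> simp [Int.negOnePow_succ]

theorem eval_T_sub_one_of_abs_eq_one (hx : |x| = 1) (k : ℤ) :
    (Chebyshev.T ℝ (k - 1)).eval x = x * (Chebyshev.T ℝ k).eval x := by
  rcases eq_or_eq_neg_of_abs_eq hx with rfl | rfl <;> simp [Int.negOnePow_sub]

namespace chebyshevPrimitive

theorem eval_first_of_abs_eq_one (hk : 1 < k) (hx : |x| = 1) :
    (chebyshevPrimitive 1 k).eval x = -(x * (Chebyshev.T ℝ k).eval x) / ((k : ℝ) ^ 2 - 1) := by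
  have hk' : (1 : ℝ) < k := mod_cast hk
  have h_add : (k : ℝ) + 1 ≠ 0 := by linarith
  have h_sub : (k : ℝ) - 1 ≠ 0 := by linarith
  simp only [chebyshevPrimitive, eval_sub, eval_smul, smul_eq_mul,
    eval_T_add_one_of_abs_eq_one hx, eval_T_sub_one_of_abs_eq_one hx]
  rw [show (k : ℝ) ^ 2 - 1 = (k + 1) * (k - 1) by ring]
  field_simp
  ring

theorem eval_second_of_abs_eq_one (hk : 2 < k) (hx : |x| = 1) :
    (chebyshevPrimitive 2 k).eval x
      = 3 * (Chebyshev.T ℝ k).eval x / (((k : ℝ) ^ 2 - 1) * ((k : ℝ) ^ 2 - 4)) := by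
  have hk' : (2 : ℝ) < k := mod_cast hk
  have hxx : x * x = 1 := by rw [← abs_mul_abs_self, hx, one_mul]
  have h_zero : (k : ℝ) ≠ 0 := by linarith
  have h_add_one : (k : ℝ) + 1 ≠ 0 := by linarith
  have h_sub_one : (k : ℝ) - 1 ≠ 0 := by linarith
  have h_add_two : (k : ℝ) + 2 ≠ 0 := by linarith
  have h_sub_two : (k : ℝ) - 2 ≠ 0 := by linarith
  rw [chebyshevPrimitive, eval_sub, eval_smul, eval_smul, smul_eq_mul, smul_eq_mul,
    eval_first_of_abs_eq_one (by lia) hx, eval_first_of_abs_eq_one (by lia) hx,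
    eval_T_add_one_of_abs_eq_one hx, eval_T_sub_one_of_abs_eq_one hx, ← mul_assoc, hxx, one_mul]
  push_cast
  rw [show ((k : ℝ) + 1) ^ 2 - 1 = k * (k + 2) by ring,
    show ((k : ℝ) - 1) ^ 2 - 1 = k * (k - 2) by ring,
    show (k : ℝ) ^ 2 - 1 = (k + 1) * (k - 1) by ring,
    show (k : ℝ) ^ 2 - 4 = (k + 2) * (k - 2) by ring]
  field_simp
  ring

theorem abs_eval_first_le_of_abs_eq_one (hk : 1 < k) (hx : |x| = 1) :
    |(chebyshevPrimitive 1 k).eval x| ≤ 1 / ((k : ℝ) - 1) ^ 2 := by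
  have hk' : (1 : ℝ) < k := mod_cast hk
  rw [eval_first_of_abs_eq_one hk hx, abs_div, abs_neg, abs_mul, hx, one_mul,
    abs_of_pos (show 0 < (k : ℝ) ^ 2 - 1 by nlinarith)]
  exact div_le_div₀ zero_le_one (Chebyshev.abs_eval_T_real_le_one k hx.le) (by nlinarith)
    (by nlinarith)

theorem abs_eval_second_le_of_abs_eq_one (hk : 2 < k) (hx : |x| = 1) :
    |(chebyshevPrimitive 2 k).eval x| ≤ 1 / ((k : ℝ) - 2) ^ 3 := by
  have hk' : (2 : ℝ) < k := mod_cast hk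
  have hd : 0 < (k : ℝ) - 2 := by linarith
  have hpos : 0 < ((k : ℝ) ^ 2 - 1) * ((k : ℝ) ^ 2 - 4) := by
    apply mul_pos <;> nlinarith
  have denominators_le : 3 * ((k : ℝ) - 2) ^ 3 ≤ ((k : ℝ) ^ 2 - 1) * ((k : ℝ) ^ 2 - 4) := by
    obtain ⟨d, hkd⟩ : ∃ d, (k : ℝ) = d + 2 := ⟨k - 2, by ring⟩
    rw [hkd, add_sub_cancel_right] at hd
    rw [hkd, ← sub_nonneg]
    ring_nf
    positivity
  calc |(chebyshevPrimitive 2 k).eval x|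
      = 3 * |(Chebyshev.T ℝ k).eval x| / (((k : ℝ) ^ 2 - 1) * ((k : ℝ) ^ 2 - 4)) := by
        rw [eval_second_of_abs_eq_one hk hx, abs_div, abs_mul, abs_of_pos hpos, Nat.abs_ofNat]
    _ ≤ 3 * 1 / (3 * ((k : ℝ) - 2) ^ 3) := by
        gcongr
        exact Chebyshev.abs_eval_T_real_le_one k hx.le
    _ = 1 / ((k : ℝ) - 2) ^ 3 := by field_simp

end chebyshevPrimitive

theorem abs_mul_one_sub_mul_neg_one_le {F g : ℝ → ℝ} {A M : ℝ} (hF : ∀ x, |x| = 1 → |F x| ≤ A)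
    (hg : ∀ x, |x| = 1 → |g x| ≤ M) : |F 1 * g 1 - F (-1) * g (-1)| ≤ 2 * (A * M) := by
  have mul_le (x : ℝ) (hx : |x| = 1) : |F x * g x| ≤ A * M := by
    rw [abs_mul]
    exact mul_le_mul (hF x hx) (hg x hx) (abs_nonneg _) ((abs_nonneg _).trans (hF x hx))
  calc _ ≤ A * M + A * M :=
        (abs_sub _ _).trans (add_le_add (mul_le 1 (by simp)) (mul_le (-1) (by simp)))
    _ = 2 * (A * M) := by ring

end Endpoints

theorem abs_le_sSup_abs_image_of_isBounded {α : Type*} {f : α → ℝ} {s : Set α}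
    (hf : Bornology.IsBounded (f '' s)) {x : α} (hx : x ∈ s) :
    |f x| ≤ sSup ((fun y ↦ |f y|) '' s) := by
  obtain ⟨K, hK⟩ := hf.exists_norm_le
  exact le_csSup ⟨K, Set.forall_mem_image.2 fun y hy ↦ hK _ ⟨y, hy, rfl⟩⟩ ⟨x, hx, rfl⟩

/-- With a right derivative, `w'` may jump, as for `w x = |x|`. -/
theorem chebyshev_moment_bound_BV_derivative_general {w w' : ℝ → ℝ} {M M' : ℝ}
    (hw : ContinuousOn w (Set.Icc (-1) 1))
    (hderiv : ∀ x ∈ Set.Ioo (-1 : ℝ) 1, HasDerivWithinAt w (w' x) (Set.Ioi x) x)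
    (hBV : BoundedVariationOn w' (Set.Icc (-1) 1))
    (hM : ∀ x, |x| = 1 → |w x| ≤ M) (hM' : ∀ x, |x| = 1 → |w' x| ≤ M') {n : ℕ} (hn : 3 ≤ n) :
    |∫ x in (-1 : ℝ)..1, (Chebyshev.T ℝ n).eval x * w x|
      ≤ 2 * M / ((n : ℝ) - 1) ^ 2 + 2 * M' / ((n : ℝ) - 2) ^ 3
        + (eVariationOn w' (Set.Icc (-1) 1)).toReal / ((n : ℝ) - 2) ^ 2 := by
  set V := (eVariationOn w' (Set.Icc (-1) 1)).toReal
  set P := fun x ↦ (chebyshevPrimitive 1 n).eval x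
  set Q := fun x ↦ (chebyshevPrimitive 2 n).eval x
  have hP (x : ℝ) : HasDerivAt P ((Chebyshev.T ℝ n).eval x) x :=
    chebyshevPrimitive.hasDerivAt_succ (m := 0) (by lia) x
  have hQ (x : ℝ) : HasDerivAt Q (P x) x := chebyshevPrimitive.hasDerivAt_succ (by lia) x
  have hPc : Continuous P := (chebyshevPrimitive 1 n).continuous
  have uIcc_eq : Set.uIcc (-1 : ℝ) 1 = Set.Icc (-1) 1 := Set.uIcc_of_le (by norm_num)
  have first_parts : ∫ x in (-1 : ℝ)..1, P x * w' x
      = P 1 * w 1 - P (-1) * w (-1) - ∫ x in (-1 : ℝ)..1, (Chebyshev.T ℝ n).eval x * w x :=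
    intervalIntegral.integral_mul_deriv_eq_deriv_mul_of_hasDeriv_right hPc.continuousOn
      (uIcc_eq ▸ hw) (fun x _ ↦ (hP x).hasDerivWithinAt) (by simpa using hderiv)
      ((Chebyshev.T ℝ n).continuous.intervalIntegrable _ _)
      (intervalIntegrable_of_boundedVariationOn (uIcc_eq ▸ hBV))
  have second_parts : |(∫ x in (-1 : ℝ)..1, P x * w' x) - (Q 1 * w' 1 - Q (-1) * w' (-1))|
      ≤ 1 / ((n : ℝ) - 2) ^ 2 * V :=
    abs_integral_deriv_mul_sub_le (by norm_num) (fun x _ ↦ hQ x) hPc.continuousOn hBV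
      fun x hx ↦ mod_cast chebyshevPrimitive.abs_eval_le (by lia) (abs_le.2 hx)
  have first_boundary : |P 1 * w 1 - P (-1) * w (-1)| ≤ 2 * (1 / ((n : ℝ) - 1) ^ 2 * M) :=
    abs_mul_one_sub_mul_neg_one_le
      (fun x hx ↦ mod_cast chebyshevPrimitive.abs_eval_first_le_of_abs_eq_one (by lia) hx) hM
  have second_boundary : |Q 1 * w' 1 - Q (-1) * w' (-1)| ≤ 2 * (1 / ((n : ℝ) - 2) ^ 3 * M') :=
    abs_mul_one_sub_mul_neg_one_le
      (fun x hx ↦ mod_cast chebyshevPrimitive.abs_eval_second_le_of_abs_eq_one (by lia) hx) hM'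
  calc |∫ x in (-1 : ℝ)..1, (Chebyshev.T ℝ n).eval x * w x|
      = |(P 1 * w 1 - P (-1) * w (-1)) - (Q 1 * w' 1 - Q (-1) * w' (-1))
          - ((∫ x in (-1 : ℝ)..1, P x * w' x) - (Q 1 * w' 1 - Q (-1) * w' (-1)))| := by
        rw [first_parts]; ring_nf
    _ ≤ 2 * (1 / ((n : ℝ) - 1) ^ 2 * M) + 2 * (1 / ((n : ℝ) - 2) ^ 3 * M')
          + 1 / ((n : ℝ) - 2) ^ 2 * V :=
        (abs_sub _ _).trans (add_le_add
          ((abs_sub _ _).trans (add_le_add first_boundary second_boundary)) second_parts)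
    _ = 2 * M / ((n : ℝ) - 1) ^ 2 + 2 * M' / ((n : ℝ) - 2) ^ 3 + V / ((n : ℝ) - 2) ^ 2 := by ring

/-- If `w` is differentiable on an open set containing `[-1,1]` with
derivative `w'` of bounded variation on `[-1,1]`, with `M = sup |w|`, `M' = sup |w'|`
and `V'` the total variation of `w'` on `[-1,1]`, then for `n ≥ 3`,
`|∫ T_n w| ≤ 2M/(n-1)² + 2M'/(n-2)³ + V'/(n-2)²`. -/
theorem chebyshev_moment_bound_BV_derivative
    (w w' : ℝ → ℝ) (U : Set ℝ) (hU : IsOpen U) (hIcc : Set.Icc (-1 : ℝ) 1 ⊆ U)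
    (hderiv : ∀ x ∈ U, HasDerivAt w (w' x) x)
    (hBV : BoundedVariationOn w' (Set.Icc (-1 : ℝ) 1))
    (M M' V' : ℝ)
    (hM : M = sSup ((fun x => |w x|) '' Set.Icc (-1 : ℝ) 1))
    (hM' : M' = sSup ((fun x => |w' x|) '' Set.Icc (-1 : ℝ) 1))
    (hV' : V' = (eVariationOn w' (Set.Icc (-1 : ℝ) 1)).toReal)
    (n : ℕ) (hn : 3 ≤ n) :
    |∫ x in (-1 : ℝ)..1, (Polynomial.Chebyshev.T ℝ n).eval x * w x|
      ≤ 2 * M / ((n : ℝ) - 1) ^ 2 + 2 * M' / ((n : ℝ) - 2) ^ 3 + V' / ((n : ℝ) - 2) ^ 2 := by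
  subst hM hM' hV'
  have hw : ContinuousOn w (Set.Icc (-1) 1) := HasDerivAt.continuousOn fun x hx ↦ hderiv x (hIcc hx)
  have hw_bdd := (isCompact_Icc.image_of_continuousOn hw).isBounded
  exact chebyshev_moment_bound_BV_derivative_general hw
    (fun x hx ↦ (hderiv x (hIcc (Set.Ioo_subset_Icc_self hx))).hasDerivWithinAt) hBV
    (fun x hx ↦ abs_le_sSup_abs_image_of_isBounded hw_bdd (abs_le.1 hx.le))
    (fun x hx ↦ abs_le_sSup_abs_image_of_isBounded
      (isBounded_image_of_boundedVariationOn hBV) (abs_le.1 hx.le)) hn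
end
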